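/- A finite primitive permutation group of almost simple type cannot have a point-stabiliser whose exponent divides 4. -/

import Mathlib

open MulAction

/-- A permutation action is primitive if it is transitive and all blocks are
trivial. -/
def IsPrimitiveAction (G Ω : Type*) [Group G] [MulAction G Ω] : Prop :=
  IsPretransitive G Ω ∧ ∀ B : Set Ω, IsBlock G B → IsTrivialBlock B

/-!
A point stabiliser `H` is a maximal subgroup with trivial core, and `H = ⊥` would make the group
cyclic.  Otherwise, by induction on the order, a group `G` with such a subgroup of exponent dividing
`4` has a non-trivial abelian normal subgroup of odd order, which almost simplicity forbids.

In a minimal counterexample `H` is a Sylow `2`-subgroup and the centraliser of an involution `z`.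
If `z` were not conjugate in `G` to another element of `H`, the focal subgroup theorem would give a
minimal normal subgroup both perfect and with proper commutator subgroup.  Hence two Sylow
`2`-subgroups meet non-trivially, and some `2`-local subgroup is not a `2`-group.  Take a maximal
`2`-subgroup `Q` normalising a `2`-subgroup `P` of this kind, a subgroup `X` of `N(P)` in which `Q`
is maximal, and `h ∈ N(Q) \ Q` in a Sylow `2`-subgroup containing `Q`.  It suffices to find
`W ≤ Q` containing `z` and normalised by `X` and `h`: then `⟨Q, h⟩` contradicts the maximality of
`Q`.

Such a `W` exists when every conjugate of `z` under `⟨X, h⟩` lies in `Q`.  If not, consider a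
shortest path in the coset graph of the amalgam of `X` and `⟨Q, h⟩` that moves
`V = Ω₁(Z(R))` out of `R`, where `R` is the core of `Q` in `X`.  By induction `X / R` has a normal
abelian subgroup of odd order, inverted by the elements of `Q` outside `R`.  As `Q` has exponent
`4`, each of its elements `g` acts on `V` with `1 + g + g² + g³ = 0`, which forces `Q / R` to have
order `2`.  Commutator computations along the path then yield a contradiction.
-/

section CyclicRelation

variable {A : Type*} [Ring A]

-- If `S` denotes the given sum, the new relation is `S * a 0 - a 0 * S = 0` divided by `g`.
theorem sum_mul_sub_mul_pow_eq_zero {g : A} (hg : IsUnit g) {a b : ℕ → A}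
    (ha : ∀ i, SemiconjBy g (a i) (a (i + 1))) (hab : ∀ i, Commute (b i) (a 0)) {n : ℕ}
    (h : ∑ i ∈ Finset.range (n + 1), b i * g ^ i = 0) :
    ∑ i ∈ Finset.range n, b (i + 1) * (a (i + 1) - a 0) * g ^ i = 0 := by
  have hpow (i : ℕ) : g ^ i * a 0 = a i * g ^ i := by
    induction i with
    | zero => simp
    | succ i ih => rw [pow_succ', mul_assoc, ih, ← mul_assoc, (ha i).eq, mul_assoc]
  have hsum : ∑ i ∈ Finset.range (n + 1), b i * (a i - a 0) * g ^ i = 0 := by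
    calc ∑ i ∈ Finset.range (n + 1), b i * (a i - a 0) * g ^ i
        = (∑ i ∈ Finset.range (n + 1), b i * g ^ i) * a 0
          - a 0 * ∑ i ∈ Finset.range (n + 1), b i * g ^ i := by
          rw [Finset.sum_mul, Finset.mul_sum, ← Finset.sum_sub_distrib]
          refine Finset.sum_congr rfl fun i _ => ?_
          rw [mul_assoc (b i) (g ^ i), hpow, ← mul_assoc (a 0), ← (hab i).eq]
          noncomm_ring
      _ = 0 := by rw [h, zero_mul, mul_zero, sub_zero]
  rw [Finset.sum_range_succ', sub_self, mul_zero, zero_mul, add_zero] at hsum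
  refine hg.mul_left_injective ?_
  simpa only [Finset.sum_mul, zero_mul, pow_succ, mul_assoc] using hsum

theorem sub_pow_three_eq_zero_of_sum_pow_eq_zero {g : A} (hg : IsUnit g)
    (hsum : ∑ i ∈ Finset.range 4, g ^ i = 0) {x : ℕ → A} (hx : ∀ i, IsUnit (x i))
    (hcomm : ∀ i j, Commute (x i) (x j)) (hgx : ∀ i, SemiconjBy g (x i) (x (i + 1)))
    (hper : ∀ i, x (i + 4) = x i) : (x 2 - x 0) ^ 3 = 0 := by
  have hcomm₂ (i j k : ℕ) : Commute (x i * x j) (x k) := (hcomm i k).mul_left (hcomm j k)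
  have hcomm₃ (i j k l : ℕ) : Commute (x i * x j) (x k * x l) :=
    (hcomm₂ i j k).mul_right (hcomm₂ i j l)
  have h₁ := sum_mul_sub_mul_pow_eq_zero hg (a := fun i => x (i + 1) * x (i + 2)) (b := fun _ => 1)
    (fun i => (hgx (i + 1)).mul_right (hgx (i + 2))) (fun _ => Commute.one_left _)
    (by simpa only [one_mul] using hsum)
  have h₂ := sum_mul_sub_mul_pow_eq_zero hg hgx
    (fun i => (Commute.one_left _).mul_left ((hcomm₂ _ _ _).sub_left (hcomm₂ _ _ _))) h₁
  have h₃ := sum_mul_sub_mul_pow_eq_zero hg (a := fun i => x i * x (i + 1))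
    (fun i => (hgx i).mul_right (hgx (i + 1)))
    (fun i => ((Commute.one_left _).mul_left ((hcomm₃ _ _ _ _).sub_left
      (hcomm₃ _ _ _ _))).mul_left ((hcomm₂ _ _ _).symm.sub_left (hcomm₂ _ _ _).symm)) h₂
  simp only [Finset.sum_range_one, zero_add, one_mul, pow_zero, mul_one, Nat.reduceAdd,
    show x 4 = x 0 from hper 0, show x 5 = x 1 from hper 1] at h₃
  have hd : Commute (x 2 - x 0) (x 1) := (hcomm 2 1).sub_left (hcomm 0 1)
  have hfactor : (x 1 * x 1) * (x 2 - x 0) ^ 3 = 0 := by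
    rw [← neg_eq_zero, ← h₃, (hcomm 0 1).eq, ← mul_sub, ← mul_sub, ← neg_sub (x 2) (x 0)]
    calc -(x 1 * x 1 * (x 2 - x 0) ^ 3)
        = -(x 1 * (x 1 * (x 2 - x 0) ^ 2) * (x 2 - x 0)) := by noncomm_ring
      _ = x 1 * -(x 2 - x 0) * (x 2 - x 0) * (x 1 * (x 2 - x 0)) := by
        rw [← (hd.pow_left 2).eq]; noncomm_ring
  exact ((hx 1).mul (hx 1)).mul_right_injective (hfactor.trans (mul_zero _).symm)

theorem map_conj_pow_four_of_sum_pow_eq_zero {G : Type*} [Group G] (h2 : (2 : A) = 0) (ρ : G →* A)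
    {g e : G} (hg : g ^ 4 = 1) (hsum : ∑ i ∈ Finset.range 4, ρ g ^ i = 0)
    (hcomm : ∀ i j : ℕ, Commute (g ^ i * e * (g ^ i)⁻¹) (g ^ j * e * (g ^ j)⁻¹)) :
    ρ ((g ^ 2 * e * (g ^ 2)⁻¹) ^ 4) = ρ (e ^ 4) := by
  nontriviality A
  have : CharP A 2 := CharTwo.of_one_ne_zero_of_two_eq_zero one_ne_zero h2
  let x (i : ℕ) : A := ρ (g ^ i * e * (g ^ i)⁻¹)
  have hx : Commute (x 2) (x 0) := (hcomm 2 0).map ρ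
  have hcube : (x 2 - x 0) ^ 3 = 0 := by
    refine sub_pow_three_eq_zero_of_sum_pow_eq_zero ((Group.isUnit g).map ρ) hsum
      (fun i => (Group.isUnit _).map ρ) (fun i j => (hcomm i j).map ρ) (fun i => ?_) fun i => ?_
    · rw [SemiconjBy, ← map_mul, ← map_mul, pow_succ']
      exact congrArg ρ (by group)
    · simp only [x, pow_add, hg, mul_one]
  have hfour : x 2 ^ 4 - x 0 ^ 4 = 0 :=
    calc x 2 ^ 4 - x 0 ^ 4
        = (x 2 - x 0) ^ 4 := (sub_pow_char_pow_of_commute (p := 2) (n := 2) hx).symm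
      _ = 0 := by rw [pow_succ, hcube, zero_mul]
  simpa only [x, ← map_pow, pow_zero, one_mul, inv_one, mul_one] using sub_eq_zero.1 hfour

end CyclicRelation

/-- The existence of a non-trivial abelian normal subgroup of odd order.  This is what excludes a
group from the class in which the argument takes place, and what the induction produces. -/
def HasOddAbelianNormal (G : Type*) [Group G] : Prop :=
  ∃ E : Subgroup G, E.Normal ∧ E ≠ ⊥ ∧ IsMulCommutative E ∧ Odd (Nat.card E)

section CoreFreeMaximal

variable {G : Type*} [Group G] {Q E : Subgroup G}

theorem eq_one_of_pow_four_eq_one_of_odd_card (hE : Odd (Nat.card E)) {e : G} (he : e ∈ E)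
    (h : e ^ 4 = 1) : e = 1 :=
  orderOf_eq_one_iff.1 <| Nat.eq_one_of_dvd_coprimes
    (Nat.Coprime.pow_left 2 (Nat.coprime_two_left.2 hE)) (orderOf_dvd_of_pow_eq_one h)
    (Subgroup.orderOf_dvd_natCard E he)

theorem isMulCommutative_of_forall_mul_self_eq_one (h : ∀ e ∈ E, e * e = 1) :
    IsMulCommutative E :=
  ⟨⟨Commute.of_orderOf_dvd_two fun e =>
    orderOf_dvd_of_pow_eq_one ((pow_two e).trans (Subtype.ext (h e e.2)))⟩⟩

theorem normal_of_le_normalizer_of_sup_eq_top (hQE : Q ⊔ E = ⊤) {N : Subgroup G}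
    (hQ : Q ≤ Subgroup.normalizer (N : Set G)) (hE : E ≤ Subgroup.normalizer (N : Set G)) :
    N.Normal :=
  Subgroup.normalizer_eq_top_iff.1 (top_le_iff.1 (hQE ▸ sup_le hQ hE))

theorem le_normalizer_of_le_centralizer {N : Subgroup G}
    (h : N ≤ Subgroup.centralizer (E : Set G)) : E ≤ Subgroup.normalizer (N : Set G) :=
  (Subgroup.le_centralizer_iff.1 h).trans (Subgroup.centralizer_le_normalizer _)

theorem eq_bot_of_le_of_normalCore_eq_bot (hcore : Q.normalCore = ⊥) {N : Subgroup G}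
    (hN : N.Normal) (hNQ : N ≤ Q) : N = ⊥ :=
  le_bot_iff.1 (hcore ▸ (Subgroup.normal_le_normalCore (hN := hN)).2 hNQ)

theorem sup_eq_top_of_normalCore_eq_bot (hQ : IsCoatom Q) (hcore : Q.normalCore = ⊥)
    (hE : E.Normal) (hE₁ : E ≠ ⊥) : Q ⊔ E = ⊤ :=
  hQ.2 _ (left_lt_sup.2 fun h => hE₁ (eq_bot_of_le_of_normalCore_eq_bot hcore hE h))

theorem inf_centralizer_eq_bot (hcore : Q.normalCore = ⊥) [E.Normal] (hQE : Q ⊔ E = ⊤) :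
    Q ⊓ Subgroup.centralizer (E : Set G) = ⊥ := by
  refine eq_bot_of_le_of_normalCore_eq_bot hcore ?_ inf_le_left
  refine normal_of_le_normalizer_of_sup_eq_top hQE ?_ (le_normalizer_of_le_centralizer inf_le_right)
  refine Subgroup.le_normalizer_iff.2 fun q hq c hc => ⟨?_, ?_⟩
  · exact Q.mul_mem (Q.mul_mem hq hc.1) (Q.inv_mem hq)
  · exact Subgroup.Normal.conj_mem inferInstance c hc.2 q

theorem inf_eq_bot_of_isMulCommutative (hcore : Q.normalCore = ⊥) [E.Normal] [IsMulCommutative E]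
    (hQE : Q ⊔ E = ⊤) : Q ⊓ E = ⊥ :=
  le_bot_iff.1 ((inf_le_inf_left Q (Subgroup.le_centralizer E)).trans
    (inf_centralizer_eq_bot hcore hQE).le)

theorem eq_bot_or_eq_of_le_of_normal (hQ : IsCoatom Q) (hcore : Q.normalCore = ⊥) [E.Normal]
    [IsMulCommutative E] (hQE : Q ⊔ E = ⊤) {N : Subgroup G} (hN : N.Normal) (hNE : N ≤ E) :
    N = ⊥ ∨ N = E := by
  refine or_iff_not_imp_left.2 fun hN₁ => le_antisymm hNE ?_
  have hQN : Q ⊔ N = ⊤ := sup_eq_top_of_normalCore_eq_bot hQ hcore hN hN₁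
  intro e he
  obtain ⟨q, hq, n, hn, rfl⟩ := Subgroup.mem_sup_of_normal_right.1 (hQN ▸ Subgroup.mem_top e)
  have hq₁ : q ∈ Q ⊓ E := ⟨hq, (E.mul_mem_cancel_right (hNE hn)).1 he⟩
  rw [inf_eq_bot_of_isMulCommutative hcore hQE, Subgroup.mem_bot] at hq₁
  rwa [hq₁, one_mul]

-- The fixed points of `q` in `E` form a normal subgroup, so only `1` is fixed; but `q` fixes
-- `e * (q * e * q⁻¹)`.
theorem conj_eq_inv_of_mul_self_eq_one (hQ : IsCoatom Q) (hcore : Q.normalCore = ⊥) [hE : E.Normal]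
    [IsMulCommutative E] (hQE : Q ⊔ E = ⊤) (hQ₂ : ∀ q ∈ Q, q * q = 1) {q e : G} (hq : q ∈ Q)
    (hq₁ : q ≠ 1) (he : e ∈ E) : q * e * q⁻¹ = e⁻¹ := by
  have hQcomm : IsMulCommutative Q := isMulCommutative_of_forall_mul_self_eq_one hQ₂
  have hnormal : (E ⊓ Subgroup.centralizer {q}).Normal := by
    refine normal_of_le_normalizer_of_sup_eq_top hQE (Subgroup.le_normalizer_iff.2 ?_)
      (le_normalizer_of_le_centralizer (inf_le_left.trans (Subgroup.le_centralizer E)))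
    refine fun a ha c hc => ⟨hE.conj_mem c hc.1 a, ?_⟩
    have ha' : a ∈ Subgroup.centralizer {q} :=
      Subgroup.mem_centralizer_singleton_iff.2 (setLike_mul_comm ha hq)
    exact Subgroup.mul_mem _ (Subgroup.mul_mem _ ha' hc.2) (Subgroup.inv_mem _ ha')
  have hfixed : E ⊓ Subgroup.centralizer {q} = ⊥ := by
    refine (eq_bot_or_eq_of_le_of_normal hQ hcore hQE hnormal inf_le_left).resolve_right
      fun h => hq₁ ?_
    have : q ∈ Q ⊓ Subgroup.centralizer (E : Set G) :=
      ⟨hq, fun e he => Subgroup.mem_centralizer_singleton_iff.1 (inf_eq_left.1 h he)⟩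
    rwa [inf_centralizer_eq_bot hcore hQE, Subgroup.mem_bot] at this
  have hqe : q * e * q⁻¹ ∈ E := hE.conj_mem e he q
  have hmem : e * (q * e * q⁻¹) ∈ E ⊓ Subgroup.centralizer {q} := by
    refine ⟨E.mul_mem he hqe, Subgroup.mem_centralizer_singleton_iff.2 ?_⟩
    rw [setLike_mul_comm he hqe]
    have hq' : q⁻¹ = q := inv_eq_of_mul_eq_one_left (hQ₂ q hq)
    calc q * e * q⁻¹ * e * q = q * (e * (q⁻¹ * e * q)) := by group
      _ = q * (e * (q * e * q⁻¹)) := by rw [hq']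
      _ = q * (q * e * q⁻¹ * e) := by rw [setLike_mul_comm he hqe]
  rw [hfixed, Subgroup.mem_bot] at hmem
  exact eq_inv_of_mul_eq_one_right hmem

theorem mul_self_eq_one_of_sum_pow_eq_zero {A : Type*} [Ring A] (h2 : (2 : A) = 0) {ρ : G →* A}
    (hρ : Function.Injective ρ) (hcore : Q.normalCore = ⊥) [hE : E.Normal] [IsMulCommutative E]
    (hodd : Odd (Nat.card E)) (hQE : Q ⊔ E = ⊤) {q : G} (hq : q ∈ Q) (hq₄ : q ^ 4 = 1)
    (hsum : ∑ i ∈ Finset.range 4, ρ q ^ i = 0) : q * q = 1 := by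
  have hqq : q * q ∈ Q ⊓ Subgroup.centralizer (E : Set G) := by
    refine ⟨Q.mul_mem hq hq, Subgroup.mem_centralizer_iff.2 fun e he => ?_⟩
    have hconj (i : ℕ) : q ^ i * e * (q ^ i)⁻¹ ∈ E := hE.conj_mem e he _
    have hpow := hρ (map_conj_pow_four_of_sum_pow_eq_zero h2 ρ hq₄ hsum
      fun i j => setLike_mul_comm (hconj i) (hconj j))
    have hcomm : Commute (q ^ 2 * e * (q ^ 2)⁻¹) e := setLike_mul_comm (hconj 2) he
    have hfix : q ^ 2 * e * (q ^ 2)⁻¹ * e⁻¹ = 1 :=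
      eq_one_of_pow_four_eq_one_of_odd_card hodd (E.mul_mem (hconj 2) (E.inv_mem he))
        (by rw [hcomm.inv_right.mul_pow, hpow, inv_pow, mul_inv_cancel])
    rw [mul_inv_eq_one, mul_inv_eq_iff_eq_mul, pow_two] at hfix
    exact hfix.symm
  rwa [inf_centralizer_eq_bot hcore hQE, Subgroup.mem_bot] at hqq

theorem mul_eq_one_of_sum_pow_eq_zero {A : Type*} [Ring A] (h2 : (2 : A) = 0) {ρ : G →* A}
    (hρ : Function.Injective ρ) (hQ : IsCoatom Q) (hcore : Q.normalCore = ⊥)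
    (hQ₄ : ∀ q ∈ Q, q ^ 4 = 1) (hsum : ∀ q ∈ Q, ∑ i ∈ Finset.range 4, ρ q ^ i = 0)
    (hG : HasOddAbelianNormal G) {s t : G} (hs : s ∈ Q) (ht : t ∈ Q) (hs₁ : s ≠ 1) (ht₁ : t ≠ 1) :
    s * t = 1 := by
  obtain ⟨E, hE, hE₁, hcomm, hodd⟩ := hG
  have hQE := sup_eq_top_of_normalCore_eq_bot hQ hcore hE hE₁
  have hQ₂ (q : G) (hq : q ∈ Q) : q * q = 1 :=
    mul_self_eq_one_of_sum_pow_eq_zero h2 hρ hcore hodd hQE hq (hQ₄ q hq) (hsum q hq)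
  have hinv {q e : G} (hq : q ∈ Q) (hq₁ : q ≠ 1) (he : e ∈ E) : q * e * q⁻¹ = e⁻¹ :=
    conj_eq_inv_of_mul_self_eq_one hQ hcore hQE hQ₂ hq hq₁ he
  have hst : s * t ∈ Q ⊓ Subgroup.centralizer (E : Set G) := by
    refine ⟨Q.mul_mem hs ht, Subgroup.mem_centralizer_iff.2 fun e he => ?_⟩
    calc e * (s * t) = s * e⁻¹ * s⁻¹ * (s * t) := by rw [hinv hs hs₁ (E.inv_mem he), inv_inv]
      _ = s * (t * e * t⁻¹) * s⁻¹ * (s * t) := by rw [hinv ht ht₁ he]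
      _ = s * t * e := by group
  rwa [inf_centralizer_eq_bot hcore hQE, Subgroup.mem_bot] at hst

end CoreFreeMaximal

section ConjugationModule

open scoped IsMulCommutative

variable {X : Type*} [Group X]

/-- The action of a group by conjugation on a normal subgroup `V`, with values in the endomorphism
ring of `V` in additive notation. -/
def conjEnd (V : Subgroup X) [V.Normal] : X →* AddMonoid.End (Additive V) :=
  (monoidEndToAdditive V).toMonoidHom.comp
    ((MulDistribMulAction.toMonoidEnd (MulAut V) V).comp MulAut.conjNormal)

theorem coe_toMul_conjEnd (V : Subgroup X) [V.Normal] (x : X) (v : Additive V) :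
    ((conjEnd V x v).toMul : X) = x * v.toMul * x⁻¹ :=
  rfl

theorem conjEnd_ker (V : Subgroup X) [V.Normal] :
    (conjEnd V).ker = Subgroup.centralizer (V : Set X) := by
  ext x
  rw [MonoidHom.mem_ker, Subgroup.mem_centralizer_iff]
  refine ⟨fun h v hv => ?_, fun h => AddMonoidHom.ext fun v => ?_⟩
  · have hxv := coe_toMul_conjEnd V x (Additive.ofMul ⟨v, hv⟩)
    rw [h] at hxv
    exact eq_mul_inv_iff_mul_eq.1 hxv
  · refine Additive.toMul.injective (Subtype.ext ((coe_toMul_conjEnd V x v).trans ?_))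
    rw [← h _ v.toMul.2, mul_inv_cancel_right]
    rfl

-- The norm of `g` sends `v` to `(v * g) ^ 4 * (g ^ 4)⁻¹`.
theorem sum_conjEnd_pow_eq_zero (V : Subgroup X) [V.Normal] [IsMulCommutative V] {g : X}
    (hg : g ^ 4 = 1) (hvg : ∀ v ∈ V, (v * g) ^ 4 = 1) :
    ∑ i ∈ Finset.range 4, conjEnd V g ^ i = 0 := by
  refine AddMonoidHom.ext fun v => Additive.toMul.injective (Subtype.ext ?_)
  simp only [← map_pow, Finset.sum_range_succ, Finset.sum_range_zero, zero_add]
  calc (g ^ 0 * (v.toMul : X) * (g ^ 0)⁻¹) * (g ^ 1 * v.toMul * (g ^ 1)⁻¹)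
        * (g ^ 2 * v.toMul * (g ^ 2)⁻¹) * (g ^ 3 * v.toMul * (g ^ 3)⁻¹)
      = ((v.toMul : X) * g) ^ 4 * (g ^ 4)⁻¹ := by
        simp only [pow_succ, pow_zero, one_mul]; group
    _ = 1 := by rw [hvg _ v.toMul.2, hg, inv_one, one_mul]

theorem isCoatom_map_of_surjective {Y : Type*} [Group Y] {f : X →* Y}
    (hf : Function.Surjective f) {Q : Subgroup X} (hQ : IsCoatom Q) (hker : f.ker ≤ Q) :
    IsCoatom (Q.map f) := by
  have hcomap : (Q.map f).comap f = Q := Subgroup.comap_map_eq_self hker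
  refine ⟨fun h => hQ.1 (by rw [← hcomap, h, Subgroup.comap_top]), fun B hB => ?_⟩
  have hlt := (Subgroup.comap_lt_comap_of_surjective hf).2 hB
  rw [hcomap] at hlt
  rw [← Subgroup.map_comap_eq_self_of_surjective hf B, hQ.2 _ hlt,
    Subgroup.map_top_of_surjective _ hf]

theorem normalCore_map_mk'_normalCore (Q : Subgroup X) :
    (Q.map (QuotientGroup.mk' Q.normalCore)).normalCore = ⊥ := by
  have hker : (QuotientGroup.mk' Q.normalCore).ker ≤ Q :=
    (QuotientGroup.ker_mk' _).trans_le Q.normalCore_le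
  refine le_bot_iff.1 ?_
  rw [← Subgroup.comap_le_comap_of_surjective (QuotientGroup.mk'_surjective Q.normalCore),
    MonoidHom.comap_bot, QuotientGroup.ker_mk', Subgroup.normal_le_normalCore]
  exact (Subgroup.comap_mono (Subgroup.normalCore_le _)).trans
    (Subgroup.comap_map_eq_self hker).le

theorem mul_mem_normalCore {Q V : Subgroup X} (hQ : IsCoatom Q) (hQ₄ : ∀ q ∈ Q, q ^ 4 = 1)
    [V.Normal] (hV : ∀ v ∈ V, v * v = 1) (hcent : Subgroup.centralizer (V : Set X) = Q.normalCore)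
    (hX : HasOddAbelianNormal (X ⧸ Q.normalCore)) {s t : X} (hs : s ∈ Q) (ht : t ∈ Q)
    (hs₁ : s ∉ Q.normalCore) (ht₁ : t ∉ Q.normalCore) : s * t ∈ Q.normalCore := by
  have := isMulCommutative_of_forall_mul_self_eq_one hV
  have hVQ : V ≤ Q := (Subgroup.le_centralizer V).trans (hcent.trans_le Q.normalCore_le)
  have hker : (conjEnd V).ker = Q.normalCore := (conjEnd_ker V).trans hcent
  let ρ : X ⧸ Q.normalCore →* AddMonoid.End (Additive V) :=
    QuotientGroup.lift Q.normalCore (conjEnd V) hker.ge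
  have hρ : Function.Injective ρ := by
    rw [← MonoidHom.ker_eq_bot_iff, QuotientGroup.ker_lift, hker, QuotientGroup.map_mk'_self]
  have hρ₂ : (2 : AddMonoid.End (Additive V)) = 0 := by
    rw [← one_add_one_eq_two]
    exact AddMonoidHom.ext fun v => Additive.toMul.injective (Subtype.ext (hV _ v.toMul.2))
  have hmem {x : X} : (x : X ⧸ Q.normalCore) = 1 ↔ x ∈ Q.normalCore := QuotientGroup.eq_one_iff x
  rw [← hmem, QuotientGroup.mk_mul]
  refine mul_eq_one_of_sum_pow_eq_zero hρ₂ hρ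
    (isCoatom_map_of_surjective (QuotientGroup.mk'_surjective _) hQ
      ((QuotientGroup.ker_mk' _).trans_le Q.normalCore_le))
    (normalCore_map_mk'_normalCore Q) ?_ ?_ hX (Subgroup.mem_map_of_mem _ hs)
    (Subgroup.mem_map_of_mem _ ht) (mt hmem.1 hs₁) (mt hmem.1 ht₁)
  · rintro _ ⟨g, hg, rfl⟩
    rw [← map_pow, hQ₄ g hg, map_one]
  · rintro _ ⟨g, hg, rfl⟩
    exact sum_conjEnd_pow_eq_zero V (hQ₄ g hg) fun v hv => hQ₄ _ (Q.mul_mem (hVQ hv) hg)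

end ConjugationModule

section PathElements

variable {G : Type*} [Group G] {X Q : Subgroup G} {h : G}

/-- The elements `h * y₁ * h * y₂ * ⋯ * h * q` with `n + 1` factors `h`, separated by elements
`yᵢ ∈ X \ Q`, and with `q ∈ Q`.  They encode the non-backtracking paths of length `n + 1` in the
coset graph of the amalgam of `X` and `⟨Q, h⟩`. -/
def pathElements (X Q : Subgroup G) (h : G) : ℕ → Set G
  | 0 => {g | ∃ q ∈ Q, g = h * q}
  | n + 1 => {g | ∃ y ∈ X, y ∉ Q ∧ ∃ f ∈ pathElements X Q h n, g = h * y * f}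

theorem mul_mul_mem_pathElements (hQX : Q ≤ X) {m n : ℕ} {k y f : G}
    (hk : k ∈ pathElements X Q h m) (hy : y ∈ X) (hyQ : y ∉ Q) (hf : f ∈ pathElements X Q h n) :
    k * y * f ∈ pathElements X Q h (m + n + 1) := by
  induction m generalizing k with
  | zero =>
    obtain ⟨q, hq, rfl⟩ := hk
    rw [Nat.zero_add]
    exact ⟨q * y, X.mul_mem (hQX hq) hy, mt (Q.mul_mem_cancel_left hq).1 hyQ, f, hf, by group⟩
  | succ m ih =>
    obtain ⟨x, hx, hxQ, k', hk', rfl⟩ := hk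
    rw [show m + 1 + n + 1 = (m + n + 1) + 1 by omega]
    exact ⟨x, hx, hxQ, _, ih hk', by group⟩

theorem exists_eq_mul_mul_of_mem_pathElements_add {m n : ℕ} {g : G}
    (hg : g ∈ pathElements X Q h (m + n + 1)) :
    ∃ k ∈ pathElements X Q h m, ∃ y ∈ X, y ∉ Q ∧ ∃ f ∈ pathElements X Q h n, g = k * y * f := by
  induction m generalizing g with
  | zero =>
    rw [Nat.zero_add] at hg
    obtain ⟨y, hy, hyQ, f, hf, rfl⟩ := hg
    exact ⟨h, ⟨1, Q.one_mem, (mul_one h).symm⟩, y, hy, hyQ, f, hf, rfl⟩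
  | succ m ih =>
    rw [show m + 1 + n + 1 = (m + n + 1) + 1 by omega] at hg
    obtain ⟨y, hy, hyQ, f, hf, rfl⟩ := hg
    obtain ⟨k, hk, x, hx, hxQ, f', hf', rfl⟩ := ih hf
    exact ⟨h * y * k, ⟨y, hy, hyQ, k, hk, rfl⟩, x, hx, hxQ, f', hf', by group⟩

theorem inv_mem_pathElements_zero (hh : h ^ 2 ∈ Q) : h⁻¹ ∈ pathElements X Q h 0 :=
  ⟨(h ^ 2)⁻¹, Q.inv_mem hh, by group⟩

theorem inv_mem_pathElements (hQX : Q ≤ X) (hQ : h ∈ Subgroup.normalizer (Q : Set G))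
    (hh : h ^ 2 ∈ Q) {n : ℕ} {g : G} (hg : g ∈ pathElements X Q h n) :
    g⁻¹ ∈ pathElements X Q h n := by
  induction n generalizing g with
  | zero =>
    obtain ⟨q, hq, rfl⟩ := hg
    have hq' : h⁻¹ * q⁻¹ * h ∈ Q := (Subgroup.mem_normalizer_iff''.1 hQ _).1 (Q.inv_mem hq)
    exact ⟨h⁻¹ * q⁻¹ * h * (h ^ 2)⁻¹, Q.mul_mem hq' (Q.inv_mem hh), by group⟩
  | succ n ih =>
    obtain ⟨y, hy, hyQ, f, hf, rfl⟩ := hg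
    have := mul_mul_mem_pathElements hQX (ih hf) (X.inv_mem hy) (mt Q.inv_mem_iff.1 hyQ)
      (inv_mem_pathElements_zero hh)
    simpa only [mul_inv_rev, mul_assoc, add_zero] using this

/-- The union of `X` and of the double cosets by `X` of the elements encoding paths.  It is all of
`X ⊔ ⟨h⟩`, which gives a normal form for the elements of that subgroup. -/
def pathNormalForms (X Q : Subgroup G) (h : G) : Set G :=
  {k | k ∈ X ∨ ∃ x ∈ X, ∃ n, ∃ g ∈ pathElements X Q h n, ∃ x' ∈ X, k = x * g * x'}

theorem mul_mem_pathNormalForms {x k : G} (hx : x ∈ X) (hk : k ∈ pathNormalForms X Q h) :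
    x * k ∈ pathNormalForms X Q h := by
  rcases hk with hk | ⟨y, hy, n, g, hg, x', hx', rfl⟩
  · exact Or.inl (X.mul_mem hx hk)
  · exact Or.inr ⟨x * y, X.mul_mem hx hy, n, g, hg, x', hx', by group⟩

theorem self_mul_mem_pathNormalForms (hQX : Q ≤ X)
    (hQ : h ∈ Subgroup.normalizer (Q : Set G)) (hh : h ^ 2 ∈ Q) {k : G}
    (hk : k ∈ pathNormalForms X Q h) : h * k ∈ pathNormalForms X Q h := by
  rcases hk with hk | ⟨y, hy, n, g, hg, x', hx', rfl⟩
  · exact Or.inr ⟨1, X.one_mem, 0, h, ⟨1, Q.one_mem, (mul_one h).symm⟩, k, hk, by group⟩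
  by_cases hyQ : y ∈ Q
  · have hq : h * y * h⁻¹ * h ^ 2 ∈ X :=
      hQX (Q.mul_mem ((Subgroup.mem_normalizer_iff.1 hQ y).1 hyQ) hh)
    cases n with
    | zero =>
      obtain ⟨q, hqQ, rfl⟩ := hg
      refine Or.inl ?_
      convert X.mul_mem (X.mul_mem hq (hQX hqQ)) hx' using 1
      simp only [pow_two]; group
    | succ n =>
      obtain ⟨w, hw, -, f, hf, rfl⟩ := hg
      refine Or.inr ⟨_, X.mul_mem hq hw, n, f, hf, x', hx', ?_⟩
      simp only [pow_two]; group
  · exact Or.inr ⟨1, X.one_mem, n + 1, h * y * g, ⟨y, hy, hyQ, g, hg, rfl⟩, x', hx', by group⟩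

theorem mem_pathNormalForms_of_mem_sup (hQX : Q ≤ X) (hQ : h ∈ Subgroup.normalizer (Q : Set G))
    (hh : h ^ 2 ∈ Q) {k : G} (hk : k ∈ X ⊔ Subgroup.zpowers h) :
    k ∈ pathNormalForms X Q h := by
  rw [← X.closure_eq, Subgroup.zpowers_eq_closure, ← Subgroup.closure_union] at hk
  induction hk using Subgroup.closure_induction_left with
  | one => exact Or.inl X.one_mem
  | mul_left x hx k _ ih =>
    rcases hx with hx | rfl
    exacts [mul_mem_pathNormalForms hx ih, self_mul_mem_pathNormalForms hQX hQ hh ih]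
  | inv_mul_cancel x hx k _ ih =>
    rcases hx with hx | rfl
    · exact mul_mem_pathNormalForms (X.inv_mem hx) ih
    · have := mul_mem_pathNormalForms (X.inv_mem (hQX hh))
        (self_mul_mem_pathNormalForms hQX hQ hh ih)
      rwa [show (x ^ 2)⁻¹ * (x * k) = x⁻¹ * k by simp only [pow_two]; group] at this

end PathElements

theorem le_normalizer_map_subtype {G : Type*} [Group G] {X : Subgroup G} (V : Subgroup X)
    [V.Normal] : X ≤ Subgroup.normalizer (V.map X.subtype : Set G) := by
  have h := Subgroup.le_normalizer_map (H := V) X.subtype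
  rwa [Subgroup.normalizer_eq_top, ← MonoidHom.range_eq_map, Subgroup.range_subtype] at h

theorem exists_le_normalizer_of_forall_inv_conj_mem {G : Type*} [Group G] {K Q : Subgroup G}
    {z : G} (hz : z ∈ K) (h : ∀ k ∈ K, k⁻¹ * z * k ∈ Q) :
    ∃ W ≤ Q, z ∈ W ∧ K ≤ Subgroup.normalizer (W : Set G) := by
  refine ⟨(Q.subgroupOf K).normalCore.map K.subtype, ?_, ?_, le_normalizer_map_subtype _⟩
  · rintro _ ⟨w, hw, rfl⟩
    exact Subgroup.normalCore_le (Q.subgroupOf K) hw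
  · refine ⟨⟨z, hz⟩, fun k => Subgroup.mem_subgroupOf.2 ?_, rfl⟩
    have := h _ (K.inv_mem k.2)
    rwa [inv_inv] at this

-- The orders of `u` and `u * a` give `b * c * (u * c * u⁻¹) * a = 1`.
theorem commute_conj_of_pow_four {G : Type*} [Group G] {u a b c : G} (hb : u * a * u⁻¹ = b)
    (hc : u * b * u⁻¹ = c) (hu : u ^ 4 = 1) (hua : (u * a) ^ 4 = 1) (ha : a * a = 1)
    (hact : c = a ∨ c = b * a * b⁻¹) : Commute a b := by
  have hprod : b * c * (u * c * u⁻¹) * a = 1 := by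
    calc b * c * (u * c * u⁻¹) * a
        = (u * a) ^ 4 * (u ^ 4)⁻¹ * (u ^ 4 * a⁻¹ * (u ^ 4)⁻¹) * a := by
          rw [← hc, ← hb]; simp only [pow_succ, pow_zero, one_mul]; group
      _ = 1 := by rw [hua, hu]; group
  have hbb : b * b = 1 := by rw [← hb, conj_mul, ha, mul_one, mul_inv_cancel]
  have hcc : c * c = 1 := by rw [← hc, conj_mul, hbb, mul_one, mul_inv_cancel]
  rcases hact with rfl | hact
  · rw [hb, mul_assoc] at hprod
    have hinv : b * c = (b * c)⁻¹ := eq_inv_of_mul_eq_one_left hprod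
    rw [mul_inv_rev, inv_eq_of_mul_eq_one_left ha, inv_eq_of_mul_eq_one_left hbb] at hinv
    exact hinv.symm
  · have hd : u * c * u⁻¹ = c * b * c⁻¹ := by
      calc u * c * u⁻¹ = (u * b * u⁻¹) * (u * a * u⁻¹) * (u * b * u⁻¹)⁻¹ := by rw [hact]; group
        _ = c * b * c⁻¹ := by rw [hc, hb]
    have hca : c⁻¹ * a = 1 := by
      calc c⁻¹ * a = (b * b) * c⁻¹ * a := by rw [hbb, one_mul]
        _ = b * (c * c) * b * c⁻¹ * a := by rw [hcc, mul_one]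
        _ = b * c * (c * b * c⁻¹) * a := by group
        _ = 1 := by rw [← hd, hprod]
    exact (mul_inv_eq_iff_eq_mul.1 (hact.symm.trans (inv_mul_eq_one.1 hca))).symm

/-- A subgroup `X` with a self-normalising maximal subgroup `Q = C_X(z)`, an elementary abelian
normal subgroup `V` containing `z`, such that `R = C_X(V)` has index at most two in `Q`, and an
element `h` which normalises `Q` and squares into it.  Avoiding elements of order eight is built
into `pow_four`, which concerns all elements squaring into `Q`. -/
structure IsPushingUpConfiguration {G : Type*} [Group G] (X Q R V : Subgroup G) (h z : G) :
    Prop where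
  covBy : Q ⋖ X
  not_le_normalizer : ¬ X ≤ Subgroup.normalizer (Q : Set G)
  pow_four : ∀ x : G, x ^ 2 ∈ Q → x ^ 4 = 1
  V_le : V ≤ X
  le_normalizer_V : X ≤ Subgroup.normalizer (V : Set G)
  V_mul_self : ∀ v ∈ V, v * v = 1
  inf_centralizer_V : X ⊓ Subgroup.centralizer (V : Set G) = R
  inf_centralizer_z : X ⊓ Subgroup.centralizer {z} = Q
  z_mem : z ∈ V
  mul_mem : ∀ s ∈ Q, ∀ t ∈ Q, s ∉ R → t ∉ R → s * t ∈ R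
  h_mem : h ∈ Subgroup.normalizer (Q : Set G)
  h_sq_mem : h ^ 2 ∈ Q

/-- The critical distance in a configuration: `g` encodes a shortest path, of length `b + 1`, at
the end of which some element `v` of `V` has left `R`. -/
structure IsCriticalPath {G : Type*} [Group G] (X Q R V : Subgroup G) (h : G) (b : ℕ) (g v : G) :
    Prop where
  conj_mem_of_lt : ∀ n < b, ∀ f ∈ pathElements X Q h n, ∀ w ∈ V, f⁻¹ * w * f ∈ R
  mem : g ∈ pathElements X Q h b
  v_mem : v ∈ V
  conj_notMem : g⁻¹ * v * g ∉ R

namespace IsPushingUpConfiguration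

variable {G : Type*} [Group G] {X Q R V : Subgroup G} {h z : G}

theorem R_le_Q (H : IsPushingUpConfiguration X Q R V h z) : R ≤ Q := by
  rw [← H.inf_centralizer_V, ← H.inf_centralizer_z]
  exact inf_le_inf_left X (Subgroup.centralizer_le (Set.singleton_subset_iff.2 H.z_mem))

theorem V_le_R (H : IsPushingUpConfiguration X Q R V h z) : V ≤ R := by
  have := isMulCommutative_of_forall_mul_self_eq_one H.V_mul_self
  exact H.inf_centralizer_V ▸ le_inf H.V_le (Subgroup.le_centralizer V)

theorem commute_of_mem_R (H : IsPushingUpConfiguration X Q R V h z) {r v : G} (hr : r ∈ R)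
    (hv : v ∈ V) : Commute r v :=
  ((Subgroup.mem_inf.1 (H.inf_centralizer_V ▸ hr)).2 v hv).symm

theorem commute_z (H : IsPushingUpConfiguration X Q R V h z) {q : G} (hq : q ∈ Q) :
    Commute q z :=
  Subgroup.mem_centralizer_singleton_iff.1 (Subgroup.mem_inf.1 (H.inf_centralizer_z ▸ hq)).2

theorem conj_mem_V (H : IsPushingUpConfiguration X Q R V h z) {x v : G} (hx : x ∈ X)
    (hv : v ∈ V) : x * v * x⁻¹ ∈ V :=
  Subgroup.le_normalizer_iff.1 H.le_normalizer_V x hx v hv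

theorem inv_conj_mem_V (H : IsPushingUpConfiguration X Q R V h z) {x v : G} (hx : x ∈ X)
    (hv : v ∈ V) : x⁻¹ * v * x ∈ V := by
  simpa only [inv_inv] using H.conj_mem_V (X.inv_mem hx) hv

theorem conj_mem_R (H : IsPushingUpConfiguration X Q R V h z) {x r : G} (hx : x ∈ X)
    (hr : r ∈ R) : x * r * x⁻¹ ∈ R := by
  have hrX : r ∈ X := H.covBy.le (H.R_le_Q hr)
  rw [← H.inf_centralizer_V]
  refine ⟨X.mul_mem (X.mul_mem hx hrX) (X.inv_mem hx), fun v hv => ?_⟩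
  calc v * (x * r * x⁻¹) = x * (x⁻¹ * v * x * r) * x⁻¹ := by group
    _ = x * (r * (x⁻¹ * v * x)) * x⁻¹ := by
      rw [(H.commute_of_mem_R hr (H.inv_conj_mem_V hx hv)).eq]
    _ = x * r * x⁻¹ * v := by group

theorem inv_conj_mem_R (H : IsPushingUpConfiguration X Q R V h z) {x r : G} (hx : x ∈ X)
    (hr : r ∈ R) : x⁻¹ * r * x ∈ R := by
  simpa only [inv_inv] using H.conj_mem_R (X.inv_mem hx) hr

theorem inv_h_conj_mem (H : IsPushingUpConfiguration X Q R V h z) {q : G} (hq : q ∈ Q) :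
    h⁻¹ * q * h ∈ Q :=
  (Subgroup.mem_normalizer_iff''.1 H.h_mem q).1 hq

theorem inv_mem_pathElements (H : IsPushingUpConfiguration X Q R V h z) {n : ℕ} {g : G}
    (hg : g ∈ pathElements X Q h n) : g⁻¹ ∈ pathElements X Q h n :=
  _root_.inv_mem_pathElements H.covBy.le H.h_mem H.h_sq_mem hg

theorem mem_of_forall_conj_mem (H : IsPushingUpConfiguration X Q R V h z) {x : G} (hx : x ∈ X)
    (hQ : ∀ q ∈ Q, x * q * x⁻¹ ∈ Q) : x ∈ Q := by
  have hle : Q ≤ X ⊓ Q.comap (MulAut.conj x).toMonoidHom := le_inf H.covBy.le hQ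
  rcases H.covBy.eq_or_eq hle inf_le_left with heq | heq
  · have hnorm : x ∈ Subgroup.normalizer (Q : Set G) := by
      refine Subgroup.mem_normalizer_iff.2 fun q => ⟨hQ q, fun hq => heq ▸ ⟨?_, hq⟩⟩
      have hqX := X.mul_mem (X.mul_mem (X.inv_mem hx) (H.covBy.le hq)) hx
      rwa [show x⁻¹ * (x * q * x⁻¹) * x = q by group] at hqX
    rcases H.covBy.eq_or_eq (le_inf H.covBy.le Subgroup.le_normalizer) inf_le_left with h₁ | h₁
    · exact h₁ ▸ ⟨hx, hnorm⟩
    · exact absurd (inf_eq_left.1 h₁) H.not_le_normalizer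
  · have hxy : x * x * x⁻¹ ∈ Q := (heq.ge hx).2
    rwa [mul_inv_cancel_right] at hxy

theorem mem_of_conj_z_mem_centralizer (H : IsPushingUpConfiguration X Q R V h z) {u : G}
    (hu : u ∈ X) (huz : u * z * u⁻¹ ∈ Subgroup.centralizer (Q : Set G)) : u ∈ Q := by
  rw [← Q.inv_mem_iff]
  refine H.mem_of_forall_conj_mem (X.inv_mem hu) fun q hq => ?_
  rw [← H.inf_centralizer_z, inv_inv]
  refine ⟨X.mul_mem (X.mul_mem (X.inv_mem hu) (H.covBy.le hq)) hu,
    Subgroup.mem_centralizer_singleton_iff.2 ?_⟩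
  calc u⁻¹ * q * u * z = u⁻¹ * (q * (u * z * u⁻¹)) * u := by group
    _ = u⁻¹ * (u * z * u⁻¹ * q) * u := by rw [huz q hq]
    _ = z * (u⁻¹ * q * u) := by group

theorem mem_centralizer_of_commute (H : IsPushingUpConfiguration X Q R V h z) {s v : G}
    (hs : s ∈ Q) (hsR : s ∉ R) (hv : v ∈ V) (hsv : Commute s v) :
    v ∈ Subgroup.centralizer (Q : Set G) := by
  intro q hq
  by_cases hqR : q ∈ R
  · exact H.commute_of_mem_R hqR hv
  · have hqs : Commute (q * s) v := H.commute_of_mem_R (H.mul_mem q hq s hs hqR hsR) hv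
    simpa only [mul_inv_cancel_right] using (hqs.mul_left hsv.inv_left).eq

theorem inv_conj_notMem (H : IsPushingUpConfiguration X Q R V h z) {s y : G} (hs : s ∈ Q)
    (hsR : s ∉ R) (hy : y ∈ X) (hyQ : y ∉ Q) : y⁻¹ * s * y ∉ Q := by
  refine fun hc => hyQ (H.mem_of_conj_z_mem_centralizer hy ?_)
  refine H.mem_centralizer_of_commute hs hsR (H.conj_mem_V hy H.z_mem) ?_
  calc s * (y * z * y⁻¹) = y * (y⁻¹ * s * y * z) * y⁻¹ := by group
    _ = y * (z * (y⁻¹ * s * y)) * y⁻¹ := by rw [(H.commute_z hc).eq]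
    _ = y * z * y⁻¹ * s := by group

theorem mem_centralizer_of_inv_conj_mem_centralizer (H : IsPushingUpConfiguration X Q R V h z)
    {y c : G} (hy : y ∈ X) (hyQ : y ∉ Q) (hc : c ∈ Subgroup.centralizer (Q : Set G))
    (hyc : y⁻¹ * c * y ∈ Subgroup.centralizer (Q : Set G)) :
    c ∈ Subgroup.centralizer (X : Set G) := by
  have hle : Q ≤ X ⊓ Subgroup.centralizer {c} :=
    le_inf H.covBy.le fun q hq => Subgroup.mem_centralizer_singleton_iff.2 (hc q hq)
  rcases H.covBy.eq_or_eq hle inf_le_left with heq | heq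
  · refine absurd (H.mem_of_forall_conj_mem hy fun q hq => ?_) hyQ
    rw [← heq]
    refine ⟨X.mul_mem (X.mul_mem hy (H.covBy.le hq)) (X.inv_mem hy),
      Subgroup.mem_centralizer_singleton_iff.2 ?_⟩
    calc y * q * y⁻¹ * c = y * (q * (y⁻¹ * c * y)) * y⁻¹ := by group
      _ = y * (y⁻¹ * c * y * q) * y⁻¹ := by rw [hyc q hq]
      _ = c * (y * q * y⁻¹) := by group
  · exact fun x hx => Subgroup.mem_centralizer_singleton_iff.1 (inf_eq_left.1 heq hx)

-- The product of two conjugates of `z` outside `C_V(Q)` is central in `X`; moving the first factor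
-- to `z`, the second becomes an element of `C_V(Q)`.
theorem inv_mul_mem_or_inv_mul_mem (H : IsPushingUpConfiguration X Q R V h z)
    (hV : ∀ v ∈ V, ∀ w ∈ V, v ∉ Subgroup.centralizer (Q : Set G) →
      w ∉ Subgroup.centralizer (Q : Set G) → v * w ∈ Subgroup.centralizer (Q : Set G))
    {s y y' : G} (hs : s ∈ Q) (hsR : s ∉ R) (hy : y ∈ X) (hyQ : y ∉ Q) (hy' : y' ∈ X)
    (hyQ' : y' ∉ Q) : y⁻¹ * y' ∈ Q ∨ (s * y)⁻¹ * y' ∈ Q := by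
  refine or_iff_not_imp_left.2 fun hyy' => ?_
  have hconj {u w : G} (hu : u ∈ X) (huQ : u ∉ Q) (hw : w ∈ X) (hwQ : w ∉ Q) :
      u * z * u⁻¹ * (w * z * w⁻¹) ∈ Subgroup.centralizer (Q : Set G) :=
    hV _ (H.conj_mem_V hu H.z_mem) _ (H.conj_mem_V hw H.z_mem)
      (mt (H.mem_of_conj_z_mem_centralizer hu) huQ) (mt (H.mem_of_conj_z_mem_centralizer hw) hwQ)
  have hsy : s * y ∈ X := X.mul_mem (H.covBy.le hs) hy
  have hcentral : s * y * z * (s * y)⁻¹ * (y' * z * y'⁻¹) ∈ Subgroup.centralizer (X : Set G) := by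
    refine H.mem_centralizer_of_inv_conj_mem_centralizer hy hyQ
      (hconj hsy (mt (Q.mul_mem_cancel_left hs).1 hyQ) hy' hyQ') ?_
    convert hconj (u := y⁻¹ * s * y) (X.mul_mem (X.mul_mem (X.inv_mem hy) (H.covBy.le hs)) hy)
      (H.inv_conj_notMem hs hsR hy hyQ) (X.mul_mem (X.inv_mem hy) hy') hyy' using 1
    group
  set c := s * y * z * (s * y)⁻¹ * (y' * z * y'⁻¹) with hc
  have hcQ : c ∈ Subgroup.centralizer (Q : Set G) := Subgroup.centralizer_le H.covBy.le hcentral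
  have hzQ : z⁻¹ ∈ Subgroup.centralizer (Q : Set G) := Subgroup.inv_mem _ fun _ => H.commute_z
  refine H.mem_of_conj_z_mem_centralizer (X.mul_mem (X.inv_mem hsy) hy') ?_
  convert Subgroup.mul_mem _ hzQ hcQ using 1
  calc (s * y)⁻¹ * y' * z * ((s * y)⁻¹ * y')⁻¹ = z⁻¹ * ((s * y)⁻¹ * (c * (s * y))) := by
        rw [hc]; group
    _ = z⁻¹ * c := by rw [← hcentral _ hsy, inv_mul_cancel_left]

theorem conj_mem_Q_of_isCriticalPath (H : IsPushingUpConfiguration X Q R V h z) {b : ℕ} {g v : G}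
    (C : IsCriticalPath X Q R V h b g v) {f w : G} (hf : f ∈ pathElements X Q h b) (hw : w ∈ V) :
    f⁻¹ * w * f ∈ Q := by
  have base {r e : G} (hr : r ∈ R) (he : e ∈ pathElements X Q h 0) : e⁻¹ * r * e ∈ Q := by
    obtain ⟨q, hq, rfl⟩ := he
    have := Q.mul_mem (Q.mul_mem (Q.inv_mem hq) (H.inv_h_conj_mem (H.R_le_Q hr))) hq
    simpa only [mul_inv_rev, mul_assoc] using this
  cases b with
  | zero => exact base (H.V_le_R hw) hf
  | succ m =>
    obtain ⟨k, hk, y, hy, -, e, he, rfl⟩ :=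
      exists_eq_mul_mul_of_mem_pathElements_add (n := 0) hf
    have := base (H.inv_conj_mem_R hy (C.conj_mem_of_lt m (Nat.lt_succ_self m) k hk w hw)) he
    simpa only [mul_inv_rev, mul_assoc] using this

-- `v * w` is moved by `g` into `R`, hence commutes with `v₀`; that is, it commutes with an element
-- of `Q` outside `R`.
theorem mul_mem_centralizer_of_isCriticalPath (H : IsPushingUpConfiguration X Q R V h z) {b : ℕ}
    {g v₀ : G} (C : IsCriticalPath X Q R V h b g v₀) {v w : G} (hv : v ∈ V) (hw : w ∈ V)
    (hvQ : v ∉ Subgroup.centralizer (Q : Set G)) (hwQ : w ∉ Subgroup.centralizer (Q : Set G)) :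
    v * w ∈ Subgroup.centralizer (Q : Set G) := by
  have hcent {u : G} (hu : u ∈ V) (hguR : g * u * g⁻¹ ∈ R) :
      u ∈ Subgroup.centralizer (Q : Set G) := by
    refine H.mem_centralizer_of_commute (H.conj_mem_Q_of_isCriticalPath C C.mem C.v_mem)
      C.conj_notMem hu ?_
    calc g⁻¹ * v₀ * g * u = g⁻¹ * (v₀ * (g * u * g⁻¹)) * g := by group
      _ = u * (g⁻¹ * v₀ * g) := by rw [← (H.commute_of_mem_R hguR C.v_mem).eq]; group
  have hguQ {u : G} (hu : u ∈ V) : g * u * g⁻¹ ∈ Q := by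
    simpa only [inv_inv] using H.conj_mem_Q_of_isCriticalPath C (H.inv_mem_pathElements C.mem) hu
  refine hcent (V.mul_mem hv hw) ?_
  rw [← conj_mul]
  exact H.mul_mem _ (hguQ hv) _ (hguQ hw) (mt (hcent hv) hvQ) (mt (hcent hw) hwQ)

theorem exists_conj_mem_of_isCriticalPath (H : IsPushingUpConfiguration X Q R V h z) {b : ℕ}
    {g v : G} (C : IsCriticalPath X Q R V h b g v) {n : ℕ} (hn : n < b)
    (htrans : ∀ f ∈ pathElements X Q h n, ∀ f' ∈ pathElements X Q h n,
      ∃ q ∈ Q, ∃ q' ∈ Q, f' = q * f * q') {k : G} (hk : k ∈ pathElements X Q h n) :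
    ∃ s ∈ Q, s ∉ R ∧ k * s * k⁻¹ ∈ Q := by
  obtain ⟨m, rfl⟩ := Nat.exists_eq_add_of_lt hn
  rw [Nat.add_comm n m] at C
  have hgvQ := H.conj_mem_Q_of_isCriticalPath C C.mem C.v_mem
  have hgvR := C.conj_notMem
  obtain ⟨l, hl, x, hx, -, e, he, rfl⟩ := exists_eq_mul_mul_of_mem_pathElements_add C.mem
  obtain ⟨q, hq, q', hq', rfl⟩ := htrans k hk e he
  refine ⟨q' * ((l * x * (q * k * q'))⁻¹ * v * (l * x * (q * k * q'))) * q'⁻¹,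
    Q.mul_mem (Q.mul_mem hq' hgvQ) (Q.inv_mem hq'), fun hc => hgvR ?_, ?_⟩
  · have := H.inv_conj_mem_R (H.covBy.le hq') hc
    simpa only [mul_assoc, inv_mul_cancel_left, inv_mul_cancel, mul_one] using this
  · have hR : x⁻¹ * (l⁻¹ * v * l) * x ∈ R :=
      H.inv_conj_mem_R hx (C.conj_mem_of_lt m (by omega) l hl v C.v_mem)
    convert Q.mul_mem (Q.mul_mem (Q.inv_mem hq) (H.R_le_Q hR)) hq using 1
    group

theorem exists_eq_mul_mul_of_isCriticalPath (H : IsPushingUpConfiguration X Q R V h z) {b : ℕ}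
    {g v : G} (C : IsCriticalPath X Q R V h b g v) {n : ℕ} (hn : n ≤ b) :
    ∀ f ∈ pathElements X Q h n, ∀ f' ∈ pathElements X Q h n,
      ∃ q ∈ Q, ∃ q' ∈ Q, f' = q * f * q' := by
  induction n with
  | zero =>
    rintro _ ⟨q, hq, rfl⟩ _ ⟨q', hq', rfl⟩
    exact ⟨1, Q.one_mem, q⁻¹ * q', Q.mul_mem (Q.inv_mem hq) hq', by group⟩
  | succ n ih =>
    intro f hf f' hf'
    obtain ⟨k, hk, y, hy, hyQ, _, ⟨q₁, hq₁, rfl⟩, rfl⟩ :=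
      exists_eq_mul_mul_of_mem_pathElements_add (m := n) (n := 0) hf
    obtain ⟨k', hk', y', hy', hyQ', _, ⟨q₂, hq₂, rfl⟩, rfl⟩ :=
      exists_eq_mul_mul_of_mem_pathElements_add (m := n) (n := 0) hf'
    have htrans := ih (Nat.le_of_succ_le hn)
    obtain ⟨s, hs, hsR, hks⟩ := H.exists_conj_mem_of_isCriticalPath C hn htrans hk
    obtain ⟨q, hq, q', hq', rfl⟩ := htrans k hk k' hk'
    have hstep {t : G} (ht : t ∈ Q) : q₁⁻¹ * (h⁻¹ * t * h) * q₂ ∈ Q :=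
      Q.mul_mem (Q.mul_mem (Q.inv_mem hq₁) (H.inv_h_conj_mem ht)) hq₂
    rcases H.inv_mul_mem_or_inv_mul_mem
        (fun v hv w hw => H.mul_mem_centralizer_of_isCriticalPath C hv hw) hs hsR hy hyQ
        (X.mul_mem (H.covBy.le hq') hy') (mt (Q.mul_mem_cancel_left hq').1 hyQ') with hc | hc
    · exact ⟨q, hq, _, hstep hc, by group⟩
    · exact ⟨q * (k * s * k⁻¹), Q.mul_mem hq hks, _, hstep hc, by group⟩

theorem mem_centralizer_of_conj_notMem (H : IsPushingUpConfiguration X Q R V h z) {u a : G}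
    (hu : u ^ 2 ∈ Q) (ha : a ∈ V) (huaQ : u * a * u⁻¹ ∈ Q) (huaR : u * a * u⁻¹ ∉ R) :
    a ∈ Subgroup.centralizer (Q : Set G) := by
  refine H.mem_centralizer_of_commute huaQ huaR ha
    (commute_conj_of_pow_four rfl rfl (H.pow_four u hu) (H.pow_four _ ?_) (H.V_mul_self a ha)
      ?_).symm
  · rw [show (u * a) ^ 2 = u * a * u⁻¹ * u ^ 2 * a by simp only [pow_two]; group]
    exact Q.mul_mem (Q.mul_mem huaQ hu) (H.R_le_Q (H.V_le_R ha))
  rw [show u * (u * a * u⁻¹) * u⁻¹ = u ^ 2 * a * (u ^ 2)⁻¹ by simp only [pow_two]; group]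
  by_cases huR : u ^ 2 ∈ R
  · exact Or.inl (mul_inv_eq_iff_eq_mul.2 (H.commute_of_mem_R huR ha).eq)
  right
  generalize u * a * u⁻¹ = b at *
  have hmem : u ^ 2 * b⁻¹ ∈ R := H.mul_mem _ hu _ (Q.inv_mem huaQ) huR (mt R.inv_mem_iff.1 huaR)
  have hcomm := H.commute_of_mem_R hmem (H.conj_mem_V (H.covBy.le huaQ) ha)
  calc u ^ 2 * a * (u ^ 2)⁻¹ = u ^ 2 * b⁻¹ * (b * a * b⁻¹) * (u ^ 2 * b⁻¹)⁻¹ := by group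
    _ = b * a * b⁻¹ := by rw [hcomm.eq, mul_inv_cancel_right]

-- Otherwise the elements of `V` moved out of `R` generate `V` and lie in `C(Q)`, so that `Q ≤ R`.
theorem conj_mem_R_of_sq_mem (H : IsPushingUpConfiguration X Q R V h z) {u : G} (hu : u ^ 2 ∈ Q)
    (huV : ∀ v ∈ V, u * v * u⁻¹ ∈ Q) : ∀ v ∈ V, u * v * u⁻¹ ∈ R := by
  intro v hv
  by_contra hvR
  have hcent {w : G} (hw : w ∈ V) (hwR : u * w * u⁻¹ ∉ R) :
      w ∈ Subgroup.centralizer (Q : Set G) :=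
    H.mem_centralizer_of_conj_notMem hu hw (huV w hw) hwR
  have hVQ : V ≤ Subgroup.centralizer (Q : Set G) := fun w hw => by
    by_cases hwR : u * w * u⁻¹ ∈ R
    · refine ((Subgroup.centralizer (Q : Set G)).mul_mem_cancel_left (hcent hv hvR)).1
        (hcent (V.mul_mem hv hw) fun hc => hvR ?_)
      rwa [← conj_mul, R.mul_mem_cancel_right hwR] at hc
    · exact hcent hw hwR
  exact hvR (H.inf_centralizer_V ▸ ⟨H.covBy.le (huV v hv), Subgroup.le_centralizer_iff.1 hVQ
    (huV v hv)⟩)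

-- If a critical path `g` existed, transitivity would give `g⁻¹ = q * g * q'`, and then
-- `u = (g * q')⁻¹` squares into `Q`.
theorem conj_mem_R_of_mem_pathElements (H : IsPushingUpConfiguration X Q R V h z) (n : ℕ) :
    ∀ g ∈ pathElements X Q h n, ∀ v ∈ V, g⁻¹ * v * g ∈ R := by
  induction n using Nat.strong_induction_on with
  | _ b hmin =>
  by_contra! hcon
  obtain ⟨g, hg, v, hv, hgv⟩ := hcon
  have C : IsCriticalPath X Q R V h b g v := ⟨hmin, hg, hv, hgv⟩
  obtain ⟨q, hq, q', hq', hqq'⟩ := H.exists_eq_mul_mul_of_isCriticalPath C le_rfl g hg g⁻¹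
    (H.inv_mem_pathElements hg)
  have husq : (q'⁻¹ * g⁻¹) ^ 2 ∈ Q := by
    have : (q'⁻¹ * g⁻¹) ^ 2 = q'⁻¹ * q := by
      calc (q'⁻¹ * g⁻¹) ^ 2 = q'⁻¹ * g⁻¹ * q'⁻¹ * g⁻¹ := by rw [pow_two, ← mul_assoc]
        _ = q'⁻¹ * g⁻¹ * q'⁻¹ * (q * g * q') := by rw [← hqq']
        _ = q'⁻¹ * (q * g * q') * q'⁻¹ * (q * g * q') := by rw [← hqq']
        _ = q'⁻¹ * q * (g * (q * g * q')) := by group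
        _ = q'⁻¹ * q := by rw [← hqq', mul_inv_cancel, mul_one]
    exact this ▸ Q.mul_mem (Q.inv_mem hq') hq
  have hconj (w : G) : q'⁻¹ * g⁻¹ * w * (q'⁻¹ * g⁻¹)⁻¹ = q'⁻¹ * (g⁻¹ * w * g) * q' := by group
  have huR := H.conj_mem_R_of_sq_mem husq (fun w hw => hconj w ▸ Q.mul_mem
    (Q.mul_mem (Q.inv_mem hq') (H.conj_mem_Q_of_isCriticalPath C hg hw)) hq') v hv
  have := H.conj_mem_R (H.covBy.le hq') huR
  rw [hconj] at this
  exact hgv (by simpa only [mul_assoc, mul_inv_cancel_left, mul_inv_cancel, mul_one] using this)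

theorem exists_le_sup_zpowers_le_normalizer (H : IsPushingUpConfiguration X Q R V h z) :
    ∃ W ≤ Q, z ∈ W ∧ X ⊔ Subgroup.zpowers h ≤ Subgroup.normalizer (W : Set G) := by
  have hRX {x r : G} (hx : x ∈ X) (hr : r ∈ R) : x⁻¹ * r * x ∈ Q :=
    H.R_le_Q (H.inv_conj_mem_R hx hr)
  refine exists_le_normalizer_of_forall_inv_conj_mem
    (le_sup_left (a := X) (H.V_le H.z_mem)) fun k hk => ?_
  rcases mem_pathNormalForms_of_mem_sup H.covBy.le H.h_mem H.h_sq_mem hk with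
    hk | ⟨x, hx, n, g, hg, x', hx', rfl⟩
  · exact hRX hk (H.V_le_R H.z_mem)
  · have := hRX hx' (H.conj_mem_R_of_mem_pathElements n g hg _ (H.inv_conj_mem_V hx H.z_mem))
    simpa only [mul_inv_rev, mul_assoc] using this

end IsPushingUpConfiguration

section Fusion

open scoped Pointwise commutatorElement

variable {G : Type*} [Group G] {p : ℕ}

theorem exists_sylow_mem_of_isPGroup {P K : Subgroup G} (hP : IsPGroup p P) {w : K}
    (hw : (w : G) ∈ P) : ∃ T : Sylow p K, w ∈ T :=
  hP.comap_subtype.exists_le_sylow.imp fun _ hT => hT hw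

theorem commutator_ne_top_of_focalSubgroup_le [Finite G] [Fact p.Prime] (S : Sylow p G)
    (hS : (S : Subgroup G) ≠ ⊥)
    (hfocal : (S : Subgroup G).focalSubgroup ≤ ⁅(S : Subgroup G), (S : Subgroup G)⁆) :
    commutator G ≠ ⊤ := by
  intro htop
  have : Group.IsNilpotent S := S.2.isNilpotent
  have : Nontrivial S := (Subgroup.nontrivial_iff_ne_bot _).2 hS
  have hlt := Subgroup.map_subtype_lt_map_subtype.2
    (Group.IsSolvable.commutator_lt_top_of_nontrivial S)
  rw [Subgroup.map_subtype_commutator, ← MonoidHom.range_eq_map, Subgroup.range_subtype] at hlt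
  refine hlt.not_ge (le_trans (le_of_eq ?_) hfocal)
  rw [← Subgroup.commutator_inf_eq_focalSubgroup, htop, top_inf_eq]

theorem focalSubgroup_le_commutator_self {H : Subgroup G}
    (hfusion : ∀ x ∈ H, ∀ g, g * x * g⁻¹ ∈ H → ∃ s ∈ H, g * x * g⁻¹ = s * x * s⁻¹) :
    H.focalSubgroup ≤ ⁅H, H⁆ := by
  rw [Subgroup.focalSubgroup_def, Subgroup.closure_le]
  rintro _ ⟨hmem, x, hx, u, rfl⟩
  have hconj : u * x⁻¹ * u⁻¹ ∈ H := by
    convert H.mul_mem (H.inv_mem hx) hmem using 1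
    rw [commutatorElement_def]; group
  obtain ⟨s, hs, hsx⟩ := hfusion x⁻¹ (H.inv_mem hx) u hconj
  have heq : ⁅x, u⁆ = ⁅x, s⁆ := by
    calc x * u * x⁻¹ * u⁻¹ = x * (u * x⁻¹ * u⁻¹) := by group
      _ = x * s * x⁻¹ * s⁻¹ := by rw [hsx]; group
  exact heq ▸ Subgroup.commutator_mem_commutator hx hs

variable [Finite G] [Fact p.Prime] {S : Sylow p G} {z : G}

theorem conj_eq_conj_of_mem_of_isPGroup
    (hiso : ∀ g, g * z * g⁻¹ ∈ S → g * z * g⁻¹ = z) {P : Subgroup G} (hP : IsPGroup p P) {a b : G}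
    (ha : a * z * a⁻¹ ∈ P) (hb : b * z * b⁻¹ ∈ P) : a * z * a⁻¹ = b * z * b⁻¹ := by
  obtain ⟨T, hT⟩ := hP.exists_le_sylow
  obtain ⟨k, rfl⟩ := exists_smul_eq G T S
  have hk {c : G} (hc : c * z * c⁻¹ ∈ P) : k * (c * z * c⁻¹) * k⁻¹ = z := by
    have hmem : k * (c * z * c⁻¹) * k⁻¹ ∈ k • T :=
      Subgroup.smul_mem_pointwise_smul _ (MulAut.conj k) _ (hT hc)
    rw [show k * (c * z * c⁻¹) * k⁻¹ = k * c * z * (k * c)⁻¹ by group] at hmem ⊢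
    exact hiso _ hmem
  exact conj_injective ((hk ha).trans (hk hb).symm)

-- `z` and `g⁻¹ * z * g` both centralise `x`; conjugating them into one Sylow subgroup of `C(x)`
-- makes them equal.
theorem exists_conj_eq_conj_of_isolated (hz : z ∈ S)
    (hS : (S : Subgroup G) = Subgroup.centralizer {z})
    (hiso : ∀ g, g * z * g⁻¹ ∈ S → g * z * g⁻¹ = z) {x g : G} (hx : x ∈ S)
    (hgx : g * x * g⁻¹ ∈ S) : ∃ s ∈ S, g * x * g⁻¹ = s * x * s⁻¹ := by
  have hcomm {y : G} : y ∈ S ↔ Commute y z := by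
    change y ∈ (S : Subgroup G) ↔ _
    rw [hS, Subgroup.mem_centralizer_singleton_iff, commute_iff_eq]
  let C := Subgroup.centralizer {x}
  have hzC : z ∈ C := Subgroup.mem_centralizer_singleton_iff.2 (hcomm.1 hx).symm
  have hzC' : g⁻¹ * z * g ∈ C := by
    refine Subgroup.mem_centralizer_singleton_iff.2 ?_
    calc g⁻¹ * z * g * x = g⁻¹ * (z * (g * x * g⁻¹)) * g := by group
      _ = x * (g⁻¹ * z * g) := by rw [← (hcomm.1 hgx).eq]; group
  obtain ⟨T, hT⟩ := exists_sylow_mem_of_isPGroup (w := ⟨z, hzC⟩) S.2 hz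
  have hzS : g⁻¹ * z * g⁻¹⁻¹ ∈ (g⁻¹ • S : Sylow p G) :=
    Subgroup.smul_mem_pointwise_smul z (MulAut.conj g⁻¹) _ hz
  rw [inv_inv] at hzS
  obtain ⟨T', hT'⟩ := exists_sylow_mem_of_isPGroup (w := ⟨g⁻¹ * z * g, hzC'⟩) (g⁻¹ • S).2 hzS
  obtain ⟨c, rfl⟩ := exists_smul_eq C T' T
  have hcz : (c : G) * g⁻¹ * z * (c * g⁻¹)⁻¹ ∈ (↑(c • T') : Subgroup C).map C.subtype := by
    refine ⟨_, Subgroup.smul_mem_pointwise_smul _ (MulAut.conj c) _ hT', ?_⟩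
    change (c : G) * (g⁻¹ * z * g) * (c : G)⁻¹ = _
    group
  have hfix := conj_eq_conj_of_mem_of_isPGroup hiso ((c • T').2.map C.subtype) hcz
    (b := 1) (by rw [one_mul, inv_one, mul_one]; exact ⟨_, hT, rfl⟩)
  rw [one_mul, inv_one, mul_one, mul_inv_eq_iff_eq_mul] at hfix
  have hc : (c : G) * x = x * c := Subgroup.mem_centralizer_singleton_iff.1 c.2
  refine ⟨g * (c : G)⁻¹, ?_, ?_⟩
  · rw [← inv_mem_iff, mul_inv_rev, inv_inv]
    exact hcomm.2 hfix
  · calc g * x * g⁻¹ = g * (c : G)⁻¹ * (c * x) * g⁻¹ := by group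
      _ = g * (c : G)⁻¹ * x * (g * (c : G)⁻¹)⁻¹ := by rw [hc]; group

theorem commutator_ne_top_of_isolated (hz : z ∈ S) (hz₁ : z ≠ 1)
    (hS : (S : Subgroup G) = Subgroup.centralizer {z})
    (hiso : ∀ g, g * z * g⁻¹ ∈ S → g * z * g⁻¹ = z) : commutator G ≠ ⊤ :=
  commutator_ne_top_of_focalSubgroup_le S
    (fun h => hz₁ (Subgroup.mem_bot.1 (h ▸ hz : z ∈ (⊥ : Subgroup G))))
    (focalSubgroup_le_commutator_self fun _ hx _ =>
      exists_conj_eq_conj_of_isolated hz hS hiso hx)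

end Fusion

section PGroup

variable {G : Type*} [Group G]

theorem isPGroup_two_of_pow_four {Q : Subgroup G} (hQ₄ : ∀ q ∈ Q, q ^ 4 = 1) : IsPGroup 2 Q :=
  fun q => ⟨2, Subtype.ext (hQ₄ q q.2)⟩

theorem isMulCommutative_or_commutator_eq_top_of_minimal {M : Subgroup G}
    (hM : Minimal (fun N : Subgroup G => N.Normal ∧ N ≠ ⊥) M) :
    IsMulCommutative M ∨ commutator M = ⊤ := by
  have := hM.prop.1
  by_cases h : ⁅M, M⁆ = ⊥
  · exact .inl (Subgroup.le_centralizer_iff_isMulCommutative.1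
      (Subgroup.commutator_eq_bot_iff_le_centralizer.1 h))
  · right
    have hMM : ⁅M, M⁆ = M := hM.eq_of_le ⟨inferInstance, h⟩ (Subgroup.commutator_le_self M)
    apply Subgroup.map_injective M.subtype_injective
    rw [Subgroup.map_subtype_commutator, hMM, ← MonoidHom.range_eq_map, Subgroup.range_subtype]

variable [Finite G] {p : ℕ} [Fact p.Prime]

theorem exists_mem_center_of_normal_of_isPGroup (hG : IsPGroup p G) {N : Subgroup G} [N.Normal]
    (hN : N ≠ ⊥) : ∃ z ∈ N, z ∈ Subgroup.center G ∧ z ≠ 1 := by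
  let _ : MulAction G N := MulAction.compHom _ (MulAut.conjNormal : G →* MulAut N)
  have hdvd : p ∣ Nat.card N :=
    (hG.to_subgroup N).card_eq_or_dvd.resolve_left fun h => hN (Subgroup.card_eq_one.1 h)
  obtain ⟨z, hz, hz₁⟩ := hG.exists_fixed_point_of_prime_dvd_card_of_fixed_point N hdvd
    (a := 1) fun x => map_one (MulAut.conjNormal x : MulAut N)
  refine ⟨z, z.2, Subgroup.mem_center_iff.2 fun x => mul_inv_eq_iff_eq_mul.1 ?_,
    fun h => hz₁ (Subtype.ext h.symm)⟩
  exact congrArg Subtype.val (hz x)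

theorem exists_sylow_eq_of_isCoatom {H : Subgroup G} (hH : IsCoatom H) (hH₁ : H ≠ ⊥)
    (hcore : H.normalCore = ⊥) (hHp : IsPGroup p H) : ∃ S : Sylow p G, (S : Subgroup G) = H := by
  obtain ⟨S, hS⟩ := hHp.exists_le_sylow
  refine ⟨S, (hH.le_iff.1 hS).resolve_left fun htop => hH₁ ?_⟩
  have hG : IsPGroup p G := (htop ▸ S.2 : IsPGroup p (⊤ : Subgroup G)).of_equiv Subgroup.topEquiv
  have : Group.IsNilpotent G := hG.isNilpotent
  exact eq_bot_of_le_of_normalCore_eq_bot hcore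
    (Subgroup.NormalizerCondition.normal_of_coatom H Group.normalizerCondition_of_isNilpotent hH)
    le_rfl

theorem exists_sylow_comap_eq_le_centralizer {M : Subgroup G} [M.Normal] {T : Sylow p M}
    (hT : (T : Subgroup M) ≠ ⊥) : ∃ (S : Sylow p G) (z : G), S.comap M.subtype = T ∧ z ∈ S ∧
      z ∈ M ∧ z ≠ 1 ∧ (S : Subgroup G) ≤ Subgroup.centralizer {z} := by
  obtain ⟨S, hS⟩ := T.exists_comap_subtype_eq
  have hMS : M.subgroupOf S ≠ ⊥ := by
    obtain ⟨t, ht, ht₁⟩ := (Subgroup.bot_or_exists_ne_one _).resolve_left hT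
    have htS : (t : G) ∈ S := (hS ▸ ht : t ∈ (S : Subgroup G).comap M.subtype)
    exact fun h => ht₁ (Subtype.ext
      (Subgroup.disjoint_def.1 (Subgroup.subgroupOf_eq_bot.1 h) t.2 htS))
  obtain ⟨z, hzM, hz, hz₁⟩ := exists_mem_center_of_normal_of_isPGroup S.2 hMS
  refine ⟨S, z, hS, z.2, hzM, fun h => hz₁ (Subtype.ext h), fun s hs => ?_⟩
  exact Subgroup.mem_centralizer_singleton_iff.2
    (congrArg Subtype.val (Subgroup.mem_center_iff.1 hz ⟨s, hs⟩))

theorem commutator_ne_top_of_isolated_of_comap_eq {M : Subgroup G} {T : Sylow p M} {S : Subgroup G}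
    (hT : S.comap M.subtype = T) {z : G} (hz : z ∈ M) (hz₁ : z ≠ 1)
    (hS : S = Subgroup.centralizer {z}) (hiso : ∀ g, g * z * g⁻¹ ∈ S → g * z * g⁻¹ = z) :
    commutator M ≠ ⊤ := by
  have hmem {x : M} : x ∈ T ↔ (x : G) ∈ S := by
    change x ∈ (T : Subgroup M) ↔ _
    rw [← hT, Subgroup.mem_comap, Subgroup.subtype_apply]
  have hcomm {x : G} : x ∈ S ↔ x * z = z * x := by rw [hS, Subgroup.mem_centralizer_singleton_iff]
  refine commutator_ne_top_of_isolated (S := T) (z := ⟨z, hz⟩) (hmem.2 (hcomm.2 rfl))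
    (fun h => hz₁ (congrArg Subtype.val h)) (Subgroup.ext fun x => ?_)
    fun m hm => Subtype.ext (hiso m (hmem.1 hm))
  rw [Subgroup.mem_centralizer_singleton_iff, Subtype.ext_iff]
  exact hmem.trans hcomm

end PGroup

/-- The class of groups in which fusion of involutions is studied: the Sylow `2`-subgroups are
non-trivial maximal subgroups, every `2`-subgroup has exponent dividing four, and only the trivial
one is normal. -/
structure HasMaximalSylowTwo (G : Type*) [Group G] : Prop where
  isCoatom (S : Sylow 2 G) : IsCoatom (S : Subgroup G)
  ne_bot (S : Sylow 2 G) : (S : Subgroup G) ≠ ⊥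
  pow_four {P : Subgroup G} (hP : IsPGroup 2 P) {g : G} (hg : g ∈ P) : g ^ 4 = 1
  eq_bot_of_normal {N : Subgroup G} (hN : N.Normal) (hN₂ : IsPGroup 2 N) : N = ⊥

namespace HasMaximalSylowTwo

open scoped Pointwise

variable {G : Type*} [Group G]

theorem sylow_eq_centralizer (hG : HasMaximalSylowTwo G) {S : Sylow 2 G} {z : G} (hz : z ∈ S)
    (hz₁ : z ≠ 1) (hle : (S : Subgroup G) ≤ Subgroup.centralizer {z}) :
    (S : Subgroup G) = Subgroup.centralizer {z} := by
  refine ((hG.isCoatom S).le_iff.1 hle |>.resolve_left fun htop => hz₁ ?_).symm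
  have hcore : (S : Subgroup G).normalCore = ⊥ :=
    hG.eq_bot_of_normal inferInstance (S.2.to_le (Subgroup.normalCore_le (S : Subgroup G)))
  refine Subgroup.mem_bot.1 (hcore ▸ fun g => ?_)
  have hg : g ∈ Subgroup.centralizer {z} := htop ▸ Subgroup.mem_top g
  rwa [Subgroup.mem_centralizer_singleton_iff.1 hg, mul_inv_cancel_right]

variable [Finite G]

theorem of_isCoatom {Q : Subgroup G} (hQ : IsCoatom Q) (hQ₁ : Q ≠ ⊥) (hcore : Q.normalCore = ⊥)
    (hQ₄ : ∀ q ∈ Q, q ^ 4 = 1) : HasMaximalSylowTwo G := by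
  obtain ⟨S, rfl⟩ := exists_sylow_eq_of_isCoatom hQ hQ₁ hcore (isPGroup_two_of_pow_four hQ₄)
  refine ⟨fun T => ?_, fun T hT => hQ₁ ?_, fun {P} hP g hg => ?_, fun hN hN₂ => ?_⟩
  · obtain ⟨g, rfl⟩ := exists_smul_eq G S T
    exact (OrderIso.isCoatom_iff (MulAut.conj g).mapSubgroup _).2 hQ
  · obtain ⟨g, rfl⟩ := exists_smul_eq G S T
    exact (Subgroup.map_eq_bot_iff_of_injective _ (MulAut.conj g).injective).1 hT
  · obtain ⟨T, hPT⟩ := hP.exists_le_sylow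
    obtain ⟨x, rfl⟩ := exists_smul_eq G S T
    obtain ⟨s, hs, rfl⟩ := hPT hg
    exact (map_pow (MulAut.conj x) s 4).symm.trans (by rw [hQ₄ s hs, map_one])
  · exact eq_bot_of_le_of_normalCore_eq_bot hcore hN (hN₂.le_sylow_of_normal S)

variable (hG : HasMaximalSylowTwo G)
include hG

theorem exists_sylow_eq_centralizer (S : Sylow 2 G) :
    ∃ z ∈ S, z ≠ 1 ∧ z * z = 1 ∧ (S : Subgroup G) = Subgroup.centralizer {z} := by
  have : Nontrivial S := (Subgroup.nontrivial_iff_ne_bot _).2 (hG.ne_bot S)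
  have := S.2.center_nontrivial
  have hdvd : 2 ∣ Nat.card (Subgroup.center S) :=
    (S.2.to_subgroup _).card_eq_or_dvd.resolve_left Finite.one_lt_card.ne'
  obtain ⟨z, hz⟩ := exists_prime_orderOf_dvd_card' 2 hdvd
  rw [orderOf_eq_prime_iff, pow_two, Subtype.ext_iff, Subtype.ext_iff, Ne, Subtype.ext_iff,
    Subtype.ext_iff] at hz
  refine ⟨z, z.1.2, hz.2, hz.1, hG.sylow_eq_centralizer z.1.2 hz.2 fun s hs => ?_⟩
  exact Subgroup.mem_centralizer_singleton_iff.2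
    (congrArg Subtype.val (Subgroup.mem_center_iff.1 z.2 ⟨s, hs⟩))

theorem exists_conj_mem_ne (hodd : ∀ N : Subgroup G, N.Normal → Odd (Nat.card N) → N = ⊥) :
    ∃ (S : Sylow 2 G) (z m : G), (S : Subgroup G) = Subgroup.centralizer {z} ∧ m * z * m⁻¹ ∈ S ∧
      m * z * m⁻¹ ≠ z := by
  have htop : (⊤ : Subgroup G) ≠ ⊥ := fun h => (hG.ne_bot default) (le_bot_iff.1 (h ▸ le_top))
  obtain ⟨M, hM⟩ := exists_minimal_of_wellFoundedLT
    (fun N : Subgroup G => N.Normal ∧ N ≠ ⊥) ⟨⊤, inferInstance, htop⟩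
  have : M.Normal := hM.prop.1
  have hdvd : 2 ∣ Nat.card M :=
    (Nat.not_odd_iff_even.1 fun h => hM.prop.2 (hodd M hM.prop.1 h)).two_dvd
  obtain ⟨S, z, hT, hzS, hzM, hz₁, hle⟩ := exists_sylow_comap_eq_le_centralizer
    ((default : Sylow 2 M).ne_bot_of_dvd_card hdvd)
  have hS := hG.sylow_eq_centralizer hzS hz₁ hle
  refine ⟨S, z, ?_⟩
  by_contra! hiso
  have hcomm : ¬ IsMulCommutative M := fun _ => by
    have hMS : M ≤ S := hS ▸ fun x hx =>
      Subgroup.mem_centralizer_singleton_iff.2 (setLike_mul_comm hx hzM)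
    exact hM.prop.2 (hG.eq_bot_of_normal hM.prop.1 (S.2.to_le hMS))
  have hperfect := (isMulCommutative_or_commutator_eq_top_of_minimal hM).resolve_left hcomm
  exact commutator_ne_top_of_isolated_of_comap_eq hT hzM hz₁ hS (fun g hg => hiso g hS hg) hperfect

end HasMaximalSylowTwo

section PLocal

open scoped Pointwise

variable {G : Type*} [Group G] [Finite G] {p : ℕ} [Fact p.Prime]

theorem exists_sylow_le_normalizer_map_subtype {H M : Subgroup G} [M.Normal] (hH : IsPGroup p H)
    (hM : ¬ p ∣ Nat.card M) (q : ℕ) [Fact q.Prime] :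
    ∃ P : Sylow q M, H ≤ Subgroup.normalizer ((P : Subgroup M).map M.subtype : Set G) := by
  let φ : H →* MulAut M := MulAut.conjNormal.comp H.subtype
  let _ : MulAction H (Sylow q M) := MulAction.compHom _ φ
  have hcard : ¬ p ∣ Nat.card (Sylow q M) := fun h =>
    hM (h.trans ((default : Sylow q M).card_dvd_index.trans (Subgroup.index_dvd_card _)))
  obtain ⟨P, hP⟩ := hH.nonempty_fixed_point_of_prime_not_dvd_card _ hcard
  refine ⟨P, Subgroup.le_normalizer_iff.2 ?_⟩
  rintro h hh _ ⟨x, hx, rfl⟩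
  have hfix : φ ⟨h, hh⟩ • P = P := hP ⟨h, hh⟩
  have hmem : φ ⟨h, hh⟩ • x ∈ φ ⟨h, hh⟩ • P := Subgroup.smul_mem_pointwise_smul x _ _ hx
  exact ⟨_, hfix ▸ hmem, rfl⟩

theorem hasOddAbelianNormal_of_isPGroup {P : Subgroup G} (hPn : P.Normal) (hP : IsPGroup p P)
    (hP₁ : P ≠ ⊥) (hodd : Odd (Nat.card P)) : HasOddAbelianNormal G := by
  have : Nontrivial P := (Subgroup.nontrivial_iff_ne_bot _).2 hP₁
  refine ⟨(Subgroup.center P).map P.subtype, inferInstance, fun h => ?_, inferInstance,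
    hodd.of_dvd_nat (Subgroup.card_dvd_of_le (Subgroup.map_subtype_le _))⟩
  exact hP.bot_lt_center.ne' ((Subgroup.map_eq_bot_iff_of_injective _ P.subtype_injective).1 h)

theorem hasOddAbelianNormal_of_odd_card {Q M : Subgroup G} (hQ : IsCoatom Q)
    (hQ₄ : ∀ q ∈ Q, q ^ 4 = 1) [M.Normal] (hM : M ≠ ⊥) (hodd : Odd (Nat.card M)) :
    HasOddAbelianNormal G := by
  obtain ⟨p, hp, hpM⟩ := Nat.exists_prime_and_dvd (mt Subgroup.card_eq_one.1 hM)
  have : Fact p.Prime := ⟨hp⟩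
  obtain ⟨P, hQP⟩ := exists_sylow_le_normalizer_map_subtype (isPGroup_two_of_pow_four hQ₄)
    hodd.not_two_dvd_nat p
  have hP₁ : (P : Subgroup M).map M.subtype ≠ ⊥ := fun h => P.ne_bot_of_dvd_card hpM
    ((Subgroup.map_eq_bot_iff_of_injective _ M.subtype_injective).1 h)
  have hPodd := hodd.of_dvd_nat (Subgroup.card_dvd_of_le (Subgroup.map_subtype_le (P : Subgroup M)))
  have hPQ : ¬ (P : Subgroup M).map M.subtype ≤ Q := fun hle => hP₁ <|
    (Subgroup.eq_bot_iff_forall _).2 fun x hx =>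
      eq_one_of_pow_four_eq_one_of_odd_card hPodd hx (hQ₄ x (hle hx))
  exact hasOddAbelianNormal_of_isPGroup (normal_of_le_normalizer_of_sup_eq_top
    (hQ.2 _ (left_lt_sup.2 hPQ)) hQP Subgroup.le_normalizer) (P.2.map _) hP₁ hPodd

theorem exists_mem_normalizer_notMem_of_lt {P D : Subgroup G} (hP : IsPGroup p P) (hD : D < P) :
    ∃ g ∈ P, g ∉ D ∧ g ∈ Subgroup.normalizer (D : Set G) := by
  have : Group.IsNilpotent P := hP.isNilpotent
  have hlt : D.subgroupOf P < ⊤ :=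
    lt_top_iff_ne_top.2 fun h => hD.not_ge (Subgroup.subgroupOf_eq_top.1 h)
  obtain ⟨x, hx, hxD⟩ := SetLike.exists_of_lt (Group.normalizerCondition_of_isNilpotent _ hlt)
  exact ⟨x, x.2, hxD, Subgroup.mem_normalizer_fintype fun d hd =>
    (Subgroup.mem_normalizer_iff.1 hx ⟨d, hD.le hd⟩).1 hd⟩

-- Take an intersection of two Sylow subgroups containing `c` of maximal order.
theorem exists_isPGroup_not_isPGroup_normalizer {S₁ S₂ : Sylow p G} (hS : S₁ ≠ S₂) {c : G}
    (h₁ : c ∈ S₁) (h₂ : c ∈ S₂) : ∃ D : Subgroup G, c ∈ D ∧ IsPGroup p D ∧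
      ¬ IsPGroup p (Subgroup.normalizer (D : Set G)) := by
  obtain ⟨⟨T₁, T₂⟩, ⟨hT, hc₁, hc₂⟩, hmax⟩ := Set.exists_max_image
    {T : Sylow p G × Sylow p G | T.1 ≠ T.2 ∧ c ∈ T.1 ∧ c ∈ T.2}
    (fun T => Nat.card (T.1 ⊓ T.2 : Subgroup G)) (Set.toFinite _) ⟨(S₁, S₂), hS, h₁, h₂⟩
  refine ⟨T₁ ⊓ T₂, ⟨hc₁, hc₂⟩, T₁.2.to_le inf_le_left, fun hN => hT ?_⟩
  obtain ⟨L, hL⟩ := hN.exists_le_sylow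
  have hDL : (T₁ ⊓ T₂ : Subgroup G) ≤ L := Subgroup.le_normalizer.trans hL
  have heq (T : Sylow p G) (hlt : (T₁ ⊓ T₂ : Subgroup G) < T) : T = L := by
    by_contra hTL
    obtain ⟨g, hgT, hgD, hgN⟩ := exists_mem_normalizer_notMem_of_lt T.2 hlt
    have hTL_eq := Subgroup.eq_of_le_of_card_ge (le_inf hlt.le hDL)
      (hmax (T, L) ⟨hTL, hlt.le ⟨hc₁, hc₂⟩, hDL ⟨hc₁, hc₂⟩⟩)
    exact hgD (hTL_eq ▸ ⟨hgT, hL hgN⟩)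
  rw [heq T₁, heq T₂]
  · exact inf_le_right.lt_of_ne fun h => hT (Sylow.ext (T₂.3 T₁.2 (inf_eq_right.1 h)))
  · exact inf_le_left.lt_of_ne fun h => hT (Sylow.ext (T₁.3 T₂.2 (inf_eq_left.1 h))).symm

end PLocal

/-- The elements of order at most two in the centre of `R`, as a subgroup of the ambient group; for
a `2`-group `R` this is usually written `Ω₁(Z(R))`. -/
def omegaCenter {G : Type*} [Group G] (R : Subgroup G) : Subgroup G where
  carrier := {v | v ∈ R ∧ v ∈ Subgroup.centralizer (R : Set G) ∧ v * v = 1}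
  one_mem' := ⟨one_mem _, one_mem _, one_mul 1⟩
  mul_mem' := by
    rintro v w ⟨hvR, hvC, hv⟩ ⟨hwR, hwC, hw⟩
    refine ⟨mul_mem hvR hwR, mul_mem hvC hwC, ?_⟩
    rw [mul_assoc, ← mul_assoc w, ← hvC w hwR |>.symm, mul_assoc, hw, mul_one, hv]
  inv_mem' := by
    rintro v ⟨hvR, hvC, hv⟩
    exact ⟨inv_mem hvR, inv_mem hvC, by rw [← mul_inv_rev, hv, inv_one]⟩

section OmegaCenter

variable {G : Type*} [Group G]

instance (R : Subgroup G) [R.Normal] : (omegaCenter R).Normal where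
  conj_mem v hv g := ⟨‹R.Normal›.conj_mem v hv.1 g,
    (inferInstance : (Subgroup.centralizer (R : Set G)).Normal).conj_mem v hv.2.1 g, by
      rw [conj_mul, hv.2.2, mul_one, mul_inv_cancel]⟩

theorem centralizer_normalCore_le {Q P : Subgroup G} [P.Normal] (hPQ : P ≤ Q)
    (hCP : Subgroup.centralizer (P : Set G) ≤ Q) :
    Subgroup.centralizer (Q.normalCore : Set G) ≤ Q.normalCore :=
  Subgroup.normal_le_normalCore.2
    ((Subgroup.centralizer_le (Subgroup.normal_le_normalCore.2 hPQ)).trans hCP)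

theorem mem_omegaCenter_normalCore {Q : Subgroup G} {z : G} (hQ : Q = Subgroup.centralizer {z})
    (hz : z * z = 1) (hC : Subgroup.centralizer (Q.normalCore : Set G) ≤ Q.normalCore) :
    z ∈ omegaCenter Q.normalCore := by
  have hzC : z ∈ Subgroup.centralizer (Q.normalCore : Set G) := fun x hx =>
    Subgroup.mem_centralizer_singleton_iff.1 (hQ.le (Q.normalCore_le hx))
  exact ⟨hC hzC, hzC, hz⟩

theorem centralizer_omegaCenter_normalCore {Q : Subgroup G} {z : G}
    (hQ : Q = Subgroup.centralizer {z}) (hz : z ∈ omegaCenter Q.normalCore) :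
    Subgroup.centralizer (omegaCenter Q.normalCore : Set G) = Q.normalCore :=
  le_antisymm
    (Subgroup.normal_le_normalCore.2
      ((Subgroup.centralizer_le (Set.singleton_subset_iff.2 hz)).trans hQ.ge))
    (Subgroup.le_centralizer_iff.1 fun _ hv => hv.2.1)

end OmegaCenter

section Subtype

variable {G : Type*} [Group G] {X Q : Subgroup G}

theorem isCoatom_subgroupOf_of_covBy (hQX : Q ⋖ X) : IsCoatom (Q.subgroupOf X) :=
  (OrderIso.isCoatom_iff (α := Set.Iic X) (Subgroup.MapSubtype.orderIso X).symm ⟨Q, hQX.le⟩).2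
    ((covBy_iff_coatom_Iic hQX.le).1 hQX)

theorem map_subtype_centralizer (V : Subgroup X) :
    (Subgroup.centralizer (V : Set X)).map X.subtype =
      X ⊓ Subgroup.centralizer (V.map X.subtype : Set G) := by
  refine le_antisymm (le_inf (Subgroup.map_subtype_le _) ?_) fun x hx => ?_
  · rintro _ ⟨x, hx, rfl⟩ _ ⟨v, hv, rfl⟩
    exact congrArg Subtype.val (hx v hv)
  · exact ⟨⟨x, hx.1⟩, fun v hv => Subtype.ext (hx.2 v ⟨v, hv, rfl⟩), rfl⟩

theorem isPushingUpConfiguration_map_omegaCenter {P : Subgroup G} {h z : G}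
    (hpow : ∀ x : G, x ^ 2 ∈ Q → x ^ 4 = 1) (hQX : Q ⋖ X)
    (hXQ : ¬ X ≤ Subgroup.normalizer (Q : Set G)) (hzQ : z ∈ Q) (hz₂ : z * z = 1)
    (hz : X ⊓ Subgroup.centralizer {z} = Q) (hXP : X ≤ Subgroup.normalizer (P : Set G))
    (hPQ : P ≤ Q) (hCP : Subgroup.centralizer (P : Set G) ≤ Q)
    (hX : HasOddAbelianNormal (X ⧸ (Q.subgroupOf X).normalCore))
    (hh : h ∈ Subgroup.normalizer (Q : Set G)) (hh₂ : h ^ 2 ∈ Q) :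
    IsPushingUpConfiguration X Q ((Q.subgroupOf X).normalCore.map X.subtype)
      ((omegaCenter (Q.subgroupOf X).normalCore).map X.subtype) h z := by
  let z' : X := ⟨z, hQX.le hzQ⟩
  have hQz : Q.subgroupOf X = Subgroup.centralizer {z'} := by
    rw [← hz, Subgroup.inf_subgroupOf_left]
    ext x
    simp only [Subgroup.mem_subgroupOf, Subgroup.mem_centralizer_singleton_iff, z', Subtype.ext_iff,
      Subgroup.coe_mul]
  have hCP' : Subgroup.centralizer (P.subgroupOf X : Set X) ≤ Q.subgroupOf X := fun x hx =>
    hCP fun p hp => congrArg Subtype.val (hx ⟨p, hQX.le (hPQ hp)⟩ hp)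
  have : (P.subgroupOf X).Normal := Subgroup.normal_subgroupOf_of_le_normalizer hXP
  have hzΩ := mem_omegaCenter_normalCore hQz (Subtype.ext hz₂)
    (centralizer_normalCore_le (P := P.subgroupOf X) (fun _ hp => hPQ hp) hCP')
  have hΩ := centralizer_omegaCenter_normalCore hQz hzΩ
  refine ⟨hQX, hXQ, hpow, Subgroup.map_subtype_le _, le_normalizer_map_subtype _, ?_, ?_, hz,
    ⟨z', hzΩ, rfl⟩, ?_, hh, hh₂⟩
  · rintro _ ⟨v, hv, rfl⟩
    exact congrArg Subtype.val hv.2.2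
  · rw [← map_subtype_centralizer, hΩ]
  · intro s hs t ht hsR htR
    exact ⟨_, mul_mem_normalCore (isCoatom_subgroupOf_of_covBy hQX)
      (fun q hq => Subtype.ext (hpow q (pow_mem hq 2))) (V := omegaCenter _)
      (fun v hv => hv.2.2) hΩ hX (s := ⟨s, hQX.le hs⟩) (t := ⟨t, hQX.le ht⟩) hs ht
      (fun hs' => hsR ⟨_, hs', rfl⟩) (fun ht' => htR ⟨_, ht', rfl⟩), rfl⟩

end Subtype

/-- A `2`-subgroup `P` whose centraliser is a `2`-group while its normaliser is not; the
obstruction to all `2`-local subgroups being `2`-groups. -/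
structure HasLargeNormalizer {G : Type*} [Group G] (P : Subgroup G) : Prop where
  isPGroup : IsPGroup 2 P
  isPGroup_centralizer : IsPGroup 2 (Subgroup.centralizer (P : Set G))
  not_isPGroup_normalizer : ¬ IsPGroup 2 (Subgroup.normalizer (P : Set G))

/-- A `2`-subgroup acting by conjugation on some subgroup with a large normaliser.  Pushing up
starts from a maximal subgroup of this kind. -/
def NormalizesLarge {G : Type*} [Group G] (Q : Subgroup G) : Prop :=
  IsPGroup 2 Q ∧ ∃ P : Subgroup G, HasLargeNormalizer P ∧ Q ≤ Subgroup.normalizer (P : Set G)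

theorem normalizer_le_normalizer_centralizer {G : Type*} [Group G] (P : Subgroup G) :
    Subgroup.normalizer (P : Set G) ≤
      Subgroup.normalizer (Subgroup.centralizer (P : Set G) : Set G) := by
  refine Subgroup.le_normalizer_iff.2 fun g hg c hc p hp => ?_
  have hcp : g⁻¹ * p * g * c = c * (g⁻¹ * p * g) :=
    hc _ ((Subgroup.mem_normalizer_iff''.1 hg p).1 hp)
  calc p * (g * c * g⁻¹) = g * (g⁻¹ * p * g * c) * g⁻¹ := by group
    _ = g * c * g⁻¹ * p := by rw [hcp]; group

theorem isPGroup_zpowers_of_pow_pow_eq_one {G : Type*} [Group G] {p n : ℕ} {x : G}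
    (hx : x ^ p ^ n = 1) : IsPGroup p (Subgroup.zpowers x) := by
  rintro ⟨_, m, rfl⟩
  refine ⟨n, Subtype.ext ?_⟩
  change (x ^ m) ^ p ^ n = 1
  rw [← zpow_natCast, zpow_comm, zpow_natCast, hx, one_zpow]

theorem exists_mem_normalizer_notMem_sq_mem {G : Type*} [Group G] [Finite G] {P D : Subgroup G}
    (hP : IsPGroup 2 P) (hP₄ : ∀ x ∈ P, x ^ 4 = 1) (hD : D < P) :
    ∃ h ∈ P, h ∉ D ∧ h ∈ Subgroup.normalizer (D : Set G) ∧ h ^ 2 ∈ D := by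
  obtain ⟨h, hhP, hhD, hhN⟩ := exists_mem_normalizer_notMem_of_lt hP hD
  by_cases hh₂ : h ^ 2 ∈ D
  · exact ⟨h, hhP, hhD, hhN, hh₂⟩
  · refine ⟨h ^ 2, pow_mem hhP 2, hh₂, pow_mem hhN 2, ?_⟩
    rw [← pow_mul, hP₄ h hhP]
    exact D.one_mem

namespace HasLargeNormalizer

variable {G : Type*} [Group G] {P Q : Subgroup G} (hP : HasLargeNormalizer P)
  (hQ : Maximal NormalizesLarge Q) (hQP : Q ≤ Subgroup.normalizer (P : Set G))
include hP hQ

theorem le_of_isPGroup {K : Subgroup G} (hK : IsPGroup 2 K) (hQK : Q ≤ K)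
    (hKP : K ≤ Subgroup.normalizer (P : Set G)) : K ≤ Q :=
  hQ.le_of_ge ⟨hK, P, hP, hKP⟩ hQK

include hQP

theorem le_of_maximal : P ≤ Q :=
  le_sup_left.trans (hP.le_of_isPGroup hQ (hP.isPGroup.to_sup_of_normal_left' hQ.prop.1 hQP)
    le_sup_right (sup_le Subgroup.le_normalizer hQP))

theorem centralizer_le_of_maximal : Subgroup.centralizer (P : Set G) ≤ Q :=
  le_sup_left.trans (hP.le_of_isPGroup hQ
    (hP.isPGroup_centralizer.to_sup_of_normal_left' hQ.prop.1
      (hQP.trans (normalizer_le_normalizer_centralizer P)))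
    le_sup_right (sup_le (Subgroup.centralizer_le_normalizer _) hQP))

theorem inf_normalizer_le_of_maximal {S : Subgroup G} (hS : IsPGroup 2 S) (hQS : Q ≤ S) :
    S ⊓ Subgroup.normalizer (P : Set G) ≤ Q :=
  hP.le_of_isPGroup hQ (hS.to_le inf_le_left) (le_inf hQS hQP) inf_le_right

omit hQP in
theorem not_isPGroup_of_lt {X : Subgroup G} (hQX : Q < X)
    (hXP : X ≤ Subgroup.normalizer (P : Set G)) : ¬ IsPGroup 2 X := fun hX =>
  hQX.not_ge (hP.le_of_isPGroup hQ hX hQX.le hXP)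

end HasLargeNormalizer

theorem not_sup_zpowers_le_normalizer_of_maximal {G : Type*} [Group G] {Q X S W : Subgroup G}
    {z h : G} (hQ : Maximal NormalizesLarge Q) (hX : ¬ IsPGroup 2 X) (hQX : Q ≤ X)
    (hS : IsPGroup 2 S) (hSz : S = Subgroup.centralizer {z}) (hQS : Q ≤ S) (hh : h ∈ S)
    (hhQ : h ∉ Q) (hWQ : W ≤ Q) (hzW : z ∈ W) :
    ¬ X ⊔ Subgroup.zpowers h ≤ Subgroup.normalizer (W : Set G) := by
  intro hN
  have hW : HasLargeNormalizer W := by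
    refine ⟨hQ.prop.1.to_le hWQ, hS.to_le ?_, fun h => hX (h.to_le (le_sup_left.trans hN))⟩
    exact hSz ▸ Subgroup.centralizer_le (Set.singleton_subset_iff.2 hzW)
  have hle : Q ⊔ Subgroup.zpowers h ≤ Q := hW.le_of_isPGroup hQ
    (hS.to_le (sup_le hQS (Subgroup.zpowers_le.2 hh))) le_sup_left
    ((sup_le_sup_right hQX _).trans hN)
  exact hhQ (hle (le_sup_right (a := Q) (Subgroup.mem_zpowers h)))

namespace HasMaximalSylowTwo

variable {G : Type*} [Group G] {P Q X : Subgroup G} (hG : HasMaximalSylowTwo G)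
include hG

theorem normalizer_ne_top_of_hasLargeNormalizer (hP : HasLargeNormalizer P) :
    Subgroup.normalizer (P : Set G) ≠ ⊤ := fun htop => by
  obtain rfl := hG.eq_bot_of_normal (Subgroup.normalizer_eq_top_iff.1 htop) hP.isPGroup
  exact hP.not_isPGroup_normalizer (hP.isPGroup_centralizer.to_le fun g _ => by
    rintro _ rfl
    rw [one_mul, mul_one])

theorem lt_sylow_of_maximal (hP : HasLargeNormalizer P) {S : Sylow 2 G}
    (hQP : Q ≤ Subgroup.normalizer (P : Set G)) (hQS : Q ≤ S) : Q < S := by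
  refine hQS.lt_of_ne fun h => ?_
  rcases (hG.isCoatom S).le_iff.1 (h ▸ hQP) with hN | hN
  · exact hG.normalizer_ne_top_of_hasLargeNormalizer hP hN
  · exact hP.not_isPGroup_normalizer (hN ▸ S.2)

theorem pow_four_of_sq_mem (hQ : IsPGroup 2 Q) {x : G} (hx : x ^ 2 ∈ Q) : x ^ 4 = 1 := by
  have hx₈ : x ^ 2 ^ 3 = 1 := (pow_mul x 2 4).trans (hG.pow_four hQ hx)
  exact hG.pow_four (isPGroup_zpowers_of_pow_pow_eq_one hx₈) (Subgroup.mem_zpowers x)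

theorem not_hasLargeNormalizer [Finite G]
    (ih : ∀ (X : Subgroup G) (Q : Subgroup X), X ≠ ⊤ → IsCoatom Q → ¬ Q.Normal →
      (∀ q ∈ Q, q ^ 4 = 1) → HasOddAbelianNormal (X ⧸ Q.normalCore))
    (P₀ : Subgroup G) : ¬ HasLargeNormalizer P₀ := by
  intro hP₀
  obtain ⟨Q, hQ⟩ := exists_maximal_of_wellFoundedGT (NormalizesLarge (G := G))
    ⟨P₀, hP₀.isPGroup, P₀, hP₀, Subgroup.le_normalizer⟩
  obtain ⟨hQ₂, P, hP, hQP⟩ := hQ.prop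
  obtain ⟨S, hQS⟩ := hQ₂.exists_le_sylow
  obtain ⟨z, hzS, -, hz₂, hSz⟩ := hG.exists_sylow_eq_centralizer S
  have hSQ := hP.inf_normalizer_le_of_maximal hQ hQP S.2 hQS
  have hPQ := hP.le_of_maximal hQ hQP
  have hzQ : z ∈ Q := hSQ ⟨hzS, Subgroup.centralizer_le_normalizer _ fun x hx =>
    Subgroup.mem_centralizer_singleton_iff.1 (hSz.le (hQS (hPQ hx)))⟩
  obtain ⟨h, hhS, hhQ, hh, hh₂⟩ := exists_mem_normalizer_notMem_sq_mem S.2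
    (fun x hx => hG.pow_four S.2 hx) (hG.lt_sylow_of_maximal hP hQP hQS)
  obtain ⟨X, hQX, hXP⟩ := exists_covBy_le_of_lt
    (hQP.lt_of_ne fun h => hP.not_isPGroup_normalizer (h ▸ hQ₂))
  have hX := ne_top_of_le_ne_top (hG.normalizer_ne_top_of_hasLargeNormalizer hP) hXP
  have hstar {W : Subgroup G} := not_sup_zpowers_le_normalizer_of_maximal (W := W) hQ
    (hP.not_isPGroup_of_lt hQ hQX.lt hXP) hQX.le S.2 hSz hQS hhS hhQ
  have hXQ : ¬ X ≤ Subgroup.normalizer (Q : Set G) := fun hXQ =>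
    hstar le_rfl hzQ (sup_le hXQ (Subgroup.zpowers_le.2 hh))
  have hXz : X ⊓ Subgroup.centralizer {z} = Q := by
    rw [← hSz, inf_comm]
    exact le_antisymm ((inf_le_inf_left _ hXP).trans hSQ) (le_inf hQS hQX.le)
  have hquot := ih X (Q.subgroupOf X) hX (isCoatom_subgroupOf_of_covBy hQX)
    (fun hn => hXQ ((Subgroup.normal_subgroupOf_iff_le_normalizer hQX.le).1 hn))
    (fun q hq => Subtype.ext (hG.pow_four hQ₂ hq))
  obtain ⟨W, hWQ, hzW, hW⟩ := (isPushingUpConfiguration_map_omegaCenter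
    (fun x => hG.pow_four_of_sq_mem hQ₂) hQX hXQ hzQ hz₂ hXz hXP hPQ
    (hP.centralizer_le_of_maximal hQ hQP) hquot hh hh₂).exists_le_sup_zpowers_le_normalizer
  exact hstar hWQ hzW hW

end HasMaximalSylowTwo

section Induction

open scoped Pointwise

theorem HasMaximalSylowTwo.exists_hasLargeNormalizer {G : Type*} [Group G] [Finite G]
    (hG : HasMaximalSylowTwo G)
    (hodd : ∀ N : Subgroup G, N.Normal → Odd (Nat.card N) → N = ⊥) :
    ∃ D : Subgroup G, HasLargeNormalizer D := by
  obtain ⟨S, z, m, hS, hmS, hmz⟩ := hG.exists_conj_mem_ne hodd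
  have hzS : z ∈ S := hS.ge (Subgroup.mem_centralizer_singleton_iff.2 rfl)
  have hne : S ≠ m⁻¹ • S := fun h => by
    have hmN := inv_mem_iff.1 (Sylow.smul_eq_iff_mem_normalizer.1 h.symm)
    rcases (hG.isCoatom S).le_iff.1 Subgroup.le_normalizer with hN | hN
    · exact hG.ne_bot S (hG.eq_bot_of_normal (Subgroup.normalizer_eq_top_iff.1 hN) S.2)
    · have hm := Subgroup.mem_centralizer_singleton_iff.1 (hS.le (hN.le hmN))
      exact hmz (by rw [hm, mul_inv_cancel_right])
  have hzm : z ∈ m⁻¹ • S := by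
    change z ∈ MulAut.conj m⁻¹ • (S : Subgroup G)
    rwa [Subgroup.mem_pointwise_smul_iff_inv_smul_mem, ← map_inv, inv_inv]
  obtain ⟨D, hzD, hD, hDN⟩ := exists_isPGroup_not_isPGroup_normalizer hne hzS hzm
  refine ⟨D, hD, S.2.to_le ?_, hDN⟩
  rw [hS]
  exact Subgroup.centralizer_le (Set.singleton_subset_iff.2 hzD)

theorem hasOddAbelianNormal_of_isCoatom {G : Type*} [Group G] [Finite G] {Q : Subgroup G}
    (hQ : IsCoatom Q) (hQ₁ : Q ≠ ⊥) (hcore : Q.normalCore = ⊥) (hQ₄ : ∀ q ∈ Q, q ^ 4 = 1) :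
    HasOddAbelianNormal G := by
  induction hn : Nat.card G using Nat.strong_induction_on generalizing G with
  | _ n ih =>
  subst hn
  by_contra hcon
  have hG := HasMaximalSylowTwo.of_isCoatom hQ hQ₁ hcore hQ₄
  obtain ⟨D, hD⟩ := hG.exists_hasLargeNormalizer fun N hN hodd => by
    by_contra hN₁
    exact hcon (hasOddAbelianNormal_of_odd_card hQ hQ₄ hN₁ hodd)
  refine hG.not_hasLargeNormalizer (fun X R hX hR hRn hR₄ => ?_) D hD
  have hsurj := QuotientGroup.mk'_surjective R.normalCore
  have hker : (QuotientGroup.mk' R.normalCore).ker = R.normalCore := QuotientGroup.ker_mk' _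
  refine ih _ ?_ (isCoatom_map_of_surjective hsurj hR (hker.le.trans R.normalCore_le)) ?_
    (normalCore_map_mk'_normalCore R) ?_ rfl
  · exact (Nat.card_le_card_of_surjective _ hsurj).trans_lt
      (X.card_le_card_group.lt_of_ne fun h => hX (X.eq_top_of_card_eq h))
  · rw [Ne, Subgroup.map_eq_bot_iff, hker]
    exact fun hle => hRn (R.normalCore_le.antisymm hle ▸ R.normalCore_normal)
  · rintro _ ⟨q, hq, rfl⟩
    rw [← map_pow, hR₄ q hq, map_one]

end Induction

section Primitive

variable {G Ω : Type*} [Group G] [MulAction G Ω]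

theorem IsPrimitiveAction.isPreprimitive (h : IsPrimitiveAction G Ω) : IsPreprimitive G Ω where
  exists_smul_eq := h.1.exists_smul_eq
  isTrivialBlock_of_isBlock := fun hB => h.2 _ hB

theorem normalCore_stabilizer_eq_bot [IsPretransitive G Ω] [FaithfulSMul G Ω] (ω : Ω) :
    (stabilizer G ω).normalCore = ⊥ := by
  refine (Subgroup.eq_bot_iff_forall _).2 fun g hg => eq_of_smul_eq_smul fun α : Ω => ?_
  obtain ⟨x, rfl⟩ := exists_smul_eq G ω α
  have hfix : (x⁻¹ * g * x⁻¹⁻¹) • ω = ω := hg x⁻¹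
  rw [inv_inv, mul_smul, mul_smul, inv_smul_eq_iff] at hfix
  rw [hfix, one_smul]

theorem nontrivial_of_faithfulSMul [FaithfulSMul G Ω] [Nontrivial G] : Nontrivial Ω := by
  by_contra hΩ
  rw [not_nontrivial_iff_subsingleton] at hΩ
  exact not_subsingleton G ⟨fun g h => eq_of_smul_eq_smul fun α : Ω => Subsingleton.elim _ _⟩

theorem isMulCommutative_top_of_isCoatom_bot (h : IsCoatom (⊥ : Subgroup G)) :
    IsMulCommutative (⊤ : Subgroup G) := by
  obtain ⟨g, -, hg⟩ := SetLike.exists_of_lt h.lt_top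
  rw [← h.2 (Subgroup.zpowers g) (bot_lt_iff_ne_bot.2 (mt Subgroup.zpowers_eq_bot.1 hg))]
  infer_instance

theorem eq_bot_of_isMulCommutative_of_centralizer_eq_bot {T E : Subgroup G} (hT : T.Normal)
    [IsSimpleGroup T] (hTcomm : ¬ ∀ s t : T, s * t = t * s)
    (hTcent : Subgroup.centralizer (T : Set G) = ⊥) (hE : E.Normal) [IsMulCommutative E] :
    E = ⊥ := by
  have hdisj : Disjoint T E := by
    rcases (Subgroup.normal_subgroupOf (H := T) (N := E)).eq_bot_or_eq_top with h | h
    · exact (Subgroup.subgroupOf_eq_bot.1 h).symm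
    · have hTE := Subgroup.subgroupOf_eq_top.1 h
      exact (hTcomm fun s t => Subtype.ext (setLike_mul_comm (hTE s.2) (hTE t.2))).elim
  exact le_bot_iff.1 (hTcent ▸ fun e he t ht =>
    (Subgroup.commute_of_normal_of_disjoint T E hT hE hdisj t e ht he))

end Primitive

theorem stmt11_general {G Ω : Type*} [Group G] [Finite G] [Nontrivial G] [MulAction G Ω]
    [FaithfulSMul G Ω] (hprim : IsPrimitiveAction G Ω)
    (hG : ∀ E : Subgroup G, E.Normal → IsMulCommutative E → E = ⊥) (ω : Ω) :
    ¬ ∀ g ∈ stabilizer G ω, g ^ 4 = 1 := by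
  intro h₄
  have := hprim.isPreprimitive
  have : Nontrivial Ω := nontrivial_of_faithfulSMul (G := G)
  have hcoatom := IsPreprimitive.isCoatom_stabilizer_of_isPreprimitive G ω
  by_cases hbot : stabilizer G ω = ⊥
  · exact top_ne_bot (hG ⊤ inferInstance (isMulCommutative_top_of_isCoatom_bot (hbot ▸ hcoatom)))
  · obtain ⟨E, hE, hE₁, hcomm, -⟩ :=
      hasOddAbelianNormal_of_isCoatom hcoatom hbot (normalCore_stabilizer_eq_bot ω) h₄
    exact hE₁ (hG E hE hcomm)

/-- A finite primitive permutation group of almost simple type (it has a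
normal non-abelian simple subgroup with trivial centraliser, so that
`T ≤ G ≤ Aut T`) cannot have a point-stabiliser whose exponent divides 4. -/
theorem stmt11 {G Ω : Type*} [Group G] [Fintype G] [Fintype Ω] [MulAction G Ω]
    [FaithfulSMul G Ω] (hprim : IsPrimitiveAction G Ω)
    (T : Subgroup G) (hTnorm : T.Normal) (hTsimple : IsSimpleGroup T)
    (hTnonab : ¬ ∀ s t : T, s * t = t * s)
    (hTcent : Subgroup.centralizer (T : Set G) = ⊥) (ω : Ω) :
    ¬ ∀ g ∈ stabilizer G ω, g ^ 4 = 1 := by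
  have : Nontrivial G :=
    not_subsingleton_iff_nontrivial.1 fun _ => hTnonab fun _ _ => Subsingleton.elim _ _
  exact stmt11_general hprim
    (fun _ hE _ => eq_bot_of_isMulCommutative_of_centralizer_eq_bot hTnorm hTnonab hTcent hE) ω
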